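/- arXiv:quant-ph/0012127 — 4 statements merged into one kernel-verified Lean document; each statement's English description precedes it below -/
import Mathlib

section
/- Let λ₁, λ₂ > 0 with λ₁ + λ₂ < 1. Then for every δ > 0 there exists n₀ such that for all n ≥ n₀, the maximal size of identification codes satisfies N(n, λ₁, λ₂) ≤ 2^(2^(n(C(W) + δ))). -/
open scoped BigOperators
open ComplexOrder
open scoped Matrix

def IsProbDist {α : Type*} [Fintype α] (P : α → ℝ) : Prop :=
  (∀ a, 0 ≤ P a) ∧ ∑ a, P a = 1

noncomputable def shannonEntropy {α : Type*} [Fintype α] (P : α → ℝ) : ℝ :=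
  -∑ a, P a * Real.logb 2 (P a)

noncomputable def mutualInfo {X Y : Type*} [Fintype X] [Fintype Y]
    (P : X → ℝ) (W : X → Y → ℝ) : ℝ :=
  shannonEntropy (fun y => ∑ x, P x * W x y) - ∑ x, P x * shannonEntropy (W x)

noncomputable def capacity {X Y : Type*} [Fintype X] [Fintype Y] (W : X → Y → ℝ) : ℝ :=
  sSup {c | ∃ P : X → ℝ, IsProbDist P ∧ c = mutualInfo P W}

def IsIDCode {X Y : Type*} [Fintype X] [Fintype Y] [DecidableEq Y]
    (W : X → Y → ℝ) (n N : ℕ) (lam1 lam2 : ℝ)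
    (P : Fin N → (Fin n → X) → ℝ) (D : Fin N → Finset (Fin n → Y)) : Prop :=
  (∀ i, IsProbDist (P i)) ∧
  (∀ i, ∑ xn : Fin n → X, P i xn * ∑ yn ∈ (D i)ᶜ, ∏ k, W (xn k) (yn k) ≤ lam1) ∧
  (∀ i j, i ≠ j → ∑ xn : Fin n → X, P j xn * ∑ yn ∈ D i, ∏ k, W (xn k) (yn k) ≤ lam2)

lemma exists_le_avg {A : Type*} [Fintype A] (P : A → ℝ) (hP : IsProbDist P) (v : A → ℝ) (T : ℝ)
    (h : ∑ a, P a * v a ≤ T) : ∃ a, v a ≤ T := by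
  by_contra hcon
  push Not at hcon
  have h0 : ∑ a, P a * (v a - T) ≤ 0 := by
    simp only [mul_sub, Finset.sum_sub_distrib, ← Finset.sum_mul, hP.2]
    linarith
  have hnn : ∀ a ∈ Finset.univ, 0 ≤ P a * (v a - T) := fun a _ =>
    mul_nonneg (hP.1 a) (by linarith [hcon a])
  have hz := (Finset.sum_eq_zero_iff_of_nonneg hnn).1 (le_antisymm h0 (Finset.sum_nonneg hnn))
  have hPz : ∀ a, P a = 0 := by
    intro a
    rcases mul_eq_zero.1 (hz a (Finset.mem_univ a)) with h | h
    · exact h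
    · linarith [hcon a]
  have := hP.2
  simp [hPz] at this

lemma maurey {A B : Type*} [Fintype A] [Fintype B] (P : A → ℝ) (hP : IsProbDist P)
    (V : A → B → ℝ) (Q : B → ℝ) (K : ℝ) (hK : 0 ≤ K) (hV0 : ∀ a b, 0 ≤ V a b)
    (hV1 : ∀ a, ∑ b, V a b ≤ 1) (hQ : ∀ b, 0 ≤ Q b) (hVK : ∀ a b, V a b ≤ K * Q b) (M : ℕ) :
    ∃ f : Fin M → A, ∑ b, (∑ i, V (f i) b - M * ∑ a, P a * V a b) ^ 2 / Q b ≤ M * K := by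
  induction M with
  | zero => exact ⟨Fin.elim0, by simp⟩
  | succ m ih =>
    obtain ⟨f, hf⟩ := ih
    set c : B → ℝ := fun b => ∑ a, P a * V a b with hc
    set S : B → ℝ := fun b => ∑ i, V (f i) b - m * c b with hS
    have h1 : ∀ b, ∑ a, P a * (S b + (V a b - c b)) ^ 2 ≤ S b ^ 2 + ∑ a, P a * V a b ^ 2 := by
      intro b
      have e : ∀ a, P a * (S b + (V a b - c b)) ^ 2
          = P a * (S b - c b) ^ 2 + 2 * (S b - c b) * (P a * V a b) + P a * V a b ^ 2 := by
        intro a; ring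
      simp only [e, Finset.sum_add_distrib, ← Finset.mul_sum, ← Finset.sum_mul, hP.2]
      change 1 * (S b - c b) ^ 2 + 2 * (S b - c b) * c b + _ ≤ _
      nlinarith [sq_nonneg (c b)]
    have h2 : ∀ a b, V a b ^ 2 / Q b ≤ K * V a b := by
      intro a b
      rcases (hQ b).eq_or_lt with h | h
      · rw [← h]; simp [mul_nonneg hK (hV0 a b)]
      · rw [div_le_iff₀ h]
        nlinarith [hVK a b, hV0 a b]
    have h3 : ∑ a, P a * ∑ b, (S b + (V a b - c b)) ^ 2 / Q b ≤ ((m : ℝ) + 1) * K := by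
      calc ∑ a, P a * ∑ b, (S b + (V a b - c b)) ^ 2 / Q b
          = ∑ b, (∑ a, P a * (S b + (V a b - c b)) ^ 2) / Q b := by
            simp only [Finset.mul_sum, Finset.sum_div]
            rw [Finset.sum_comm]
            simp only [mul_div_assoc]
        _ ≤ ∑ b, (S b ^ 2 / Q b + ∑ a, P a * (K * V a b)) := by
            apply Finset.sum_le_sum
            intro b _
            refine (div_le_div_of_nonneg_right (h1 b) (hQ b)).trans ?_
            rw [add_div, Finset.sum_div]
            gcongr with a _
            rw [mul_div_assoc]
            exact mul_le_mul_of_nonneg_left (h2 a b) (hP.1 a)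
        _ = ∑ b, S b ^ 2 / Q b + K * ∑ a, P a * ∑ b, V a b := by
            rw [Finset.sum_add_distrib, Finset.sum_comm]
            congr 1
            simp only [Finset.mul_sum]
            refine Finset.sum_congr rfl fun a _ => Finset.sum_congr rfl fun b _ => ?_
            ring
        _ ≤ m * K + K * ∑ a, P a * 1 := by
            gcongr with a _
            · exact hP.1 a
            · exact hV1 a
        _ = _ := by
            simp only [mul_one, hP.2]; ring
    obtain ⟨a, ha⟩ := exists_le_avg P hP _ _ h3
    refine ⟨Fin.cons a f, ?_⟩
    push_cast
    refine le_trans (le_of_eq ?_) ha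
    refine Finset.sum_congr rfl fun b _ => ?_
    rw [Fin.sum_univ_succ]
    simp only [Fin.cons_zero, Fin.cons_succ, hS]
    change (V a b + ∑ i, V (f i) b - ((m : ℝ) + 1) * c b) ^ 2 / Q b = _
    ring

lemma maurey_l1 {A B : Type*} [Fintype A] [Fintype B] (P : A → ℝ) (hP : IsProbDist P)
    (V : A → B → ℝ) (Q : B → ℝ) (K : ℝ) (hK : 0 ≤ K) (hV0 : ∀ a b, 0 ≤ V a b)
    (hV1 : ∀ a, ∑ b, V a b ≤ 1) (hQ : IsProbDist Q) (hVK : ∀ a b, V a b ≤ K * Q b) (M : ℕ)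
    (η : ℝ) (hη : 0 ≤ η) (hM : K ≤ η ^ 2 * M) (hM0 : 0 < M) :
    ∃ f : Fin M → A, ∀ D : Finset B,
      |(∑ b ∈ D, ∑ i, V (f i) b) / M - ∑ a, P a * ∑ b ∈ D, V a b| ≤ η := by
  obtain ⟨f, hf⟩ := maurey P hP V Q K hK hV0 hV1 hQ.1 hVK M
  refine ⟨f, fun D => ?_⟩
  have hMr : (0 : ℝ) < M := by exact_mod_cast hM0
  set d : B → ℝ := fun b => ∑ i, V (f i) b - M * ∑ a, P a * V a b with hd
  have hz : ∀ b, Q b = 0 → d b = 0 := by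
    intro b hb
    have : ∀ a, V a b = 0 := fun a => le_antisymm (by simpa [hb] using hVK a b) (hV0 a b)
    simp [hd, this]
  have h1 : (∑ b ∈ D, d b) ^ 2 ≤ (M * η) ^ 2 := by
    have hcs := Finset.sum_mul_sq_le_sq_mul_sq D (fun b => √(Q b)) (fun b => d b / √(Q b))
    have e1 : ∑ b ∈ D, √(Q b) * (d b / √(Q b)) = ∑ b ∈ D, d b := by
      refine Finset.sum_congr rfl fun b _ => ?_
      rcases (hQ.1 b).eq_or_lt with h | h
      · rw [hz b h.symm]; simp
      · have := Real.sqrt_pos.2 h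
        field_simp
    rw [e1] at hcs
    have e2 : ∑ b ∈ D, √(Q b) ^ 2 ≤ 1 := by
      rw [← hQ.2]
      simp only [Real.sq_sqrt (hQ.1 _)]
      exact Finset.sum_le_sum_of_subset_of_nonneg (Finset.subset_univ _) fun b _ _ => hQ.1 b
    have e3 : ∑ b ∈ D, (d b / √(Q b)) ^ 2 ≤ M * K := by
      refine le_trans ?_ hf
      simp only [div_pow, Real.sq_sqrt (hQ.1 _)]
      exact Finset.sum_le_sum_of_subset_of_nonneg (Finset.subset_univ _)
        fun b _ _ => div_nonneg (sq_nonneg _) (hQ.1 b)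
    calc _ ≤ _ := hcs
      _ ≤ 1 * (M * K) := mul_le_mul e2 e3 (Finset.sum_nonneg fun _ _ => sq_nonneg _) zero_le_one
      _ ≤ M * (η ^ 2 * M) := by rw [one_mul]; gcongr
      _ = _ := by ring
  have h2 := abs_le_of_sq_le_sq h1 (by positivity)
  have e : (∑ b ∈ D, ∑ i, V (f i) b) / M - ∑ a, P a * ∑ b ∈ D, V a b = (∑ b ∈ D, d b) / M := by
    have : ∑ b ∈ D, d b = ∑ b ∈ D, ∑ i, V (f i) b - M * ∑ a, P a * ∑ b ∈ D, V a b := by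
      simp only [hd, Finset.sum_sub_distrib, ← Finset.mul_sum]
      congr 2
      rw [Finset.sum_comm]
      simp only [Finset.mul_sum]
    rw [this]; field_simp
  rw [e, abs_div, abs_of_pos hMr, div_le_iff₀ hMr, mul_comm η]
  exact h2

lemma sum_shannon {α : Type*} [Fintype α] (P : α → ℝ) :
    shannonEntropy P * Real.log 2 = ∑ a, Real.negMulLog (P a) := by
  have : Real.log 2 ≠ 0 := (Real.log_pos one_lt_two).ne'
  simp only [shannonEntropy, Real.negMulLog, Real.logb, neg_mul, Finset.sum_mul,
    Finset.sum_neg_distrib]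
  congr 1
  refine Finset.sum_congr rfl fun a _ => ?_
  field_simp

noncomputable def JJ {X Y : Type*} [Fintype X] [Fintype Y] (W : X → Y → ℝ) (P : X → ℝ) : ℝ :=
  ∑ y, Real.negMulLog (∑ x, P x * W x y) - ∑ x, P x * ∑ y, Real.negMulLog (W x y)

lemma mutualInfo_mul {X Y : Type*} [Fintype X] [Fintype Y] (W : X → Y → ℝ) (P : X → ℝ) :
    mutualInfo P W * Real.log 2 = JJ W P := by
  simp only [mutualInfo, JJ, sub_mul, sum_shannon, Finset.sum_mul, mul_assoc]

lemma exists_max {X Y : Type*} [Fintype X] [Fintype Y] [Nonempty X] (W : X → Y → ℝ) :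
    ∃ P : X → ℝ, IsProbDist P ∧ JJ W P = capacity W * Real.log 2 ∧
      ∀ P', IsProbDist P' → JJ W P' ≤ JJ W P := by
  classical
  have hl : 0 < Real.log 2 := Real.log_pos one_lt_two
  have hcont : Continuous (JJ W) := by
    unfold JJ
    refine Continuous.sub ?_ (by fun_prop)
    refine continuous_finsetSum _ fun y _ => ?_
    exact Real.continuous_negMulLog.comp (by fun_prop)
  obtain ⟨P, hP, hmax⟩ := (isCompact_stdSimplex ℝ X).exists_isMaxOn
    ⟨Pi.single (Classical.arbitrary X) 1, single_mem_stdSimplex ℝ _⟩ hcont.continuousOn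
  refine ⟨P, hP, ?_, fun P' hP' => hmax hP'⟩
  rw [← mutualInfo_mul]
  congr 1
  symm
  apply IsGreatest.csSup_eq
  refine ⟨⟨P, hP, rfl⟩, ?_⟩
  rintro c ⟨P', hP', rfl⟩
  have := hmax hP'
  simp only [Set.mem_ofPred_eq, ← mutualInfo_mul] at this
  exact le_of_mul_le_mul_right this hl

lemma gibbs_term (q r : ℝ) (hq : 0 ≤ q) (h : 0 < q → 0 < r) (hr : 0 ≤ r) :
    q * Real.log r + Real.negMulLog q ≤ r - q := by
  rcases hq.eq_or_lt with h0 | h0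
  · simp [← h0, hr]
  · have h1 := h h0
    have h2 := Real.log_le_sub_one_of_pos (div_pos h1 h0)
    rw [Real.log_div h1.ne' h0.ne'] at h2
    have h3 := mul_le_mul_of_nonneg_left h2 h0.le
    rw [mul_sub, mul_sub, mul_div_cancel₀ _ h0.ne'] at h3
    simp only [Real.negMulLog]
    linarith

lemma kkt {X Y : Type*} [Fintype X] [Fintype Y] [Nonempty X] (W : X → Y → ℝ)
    (hW : ∀ x, IsProbDist (W x)) :
    ∃ Q : Y → ℝ, IsProbDist Q ∧ (∀ x y, 0 < W x y → 0 < Q y) ∧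
      ∀ x, ∑ y, W x y * (Real.log (W x y) - Real.log (Q y)) ≤ capacity W * Real.log 2 := by
  classical
  obtain ⟨P, hP, hC, hmax⟩ := exists_max W
  set Q : Y → ℝ := fun y => ∑ x, P x * W x y with hQ
  have hQ0 : ∀ y, 0 ≤ Q y := fun y => Finset.sum_nonneg fun x _ => mul_nonneg (hP.1 x) ((hW x).1 y)
  have hQ1 : ∑ y, Q y = 1 := by
    simp only [hQ]
    rw [Finset.sum_comm]
    simp only [← Finset.mul_sum, (hW _).2, mul_one, hP.2]
  have key : ∀ x0, ∀ t : ℝ, 0 < t → t < 1 →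
      ∑ y, W x0 y * (-Real.log ((1 - t) * Q y + t * W x0 y)) ≤
        capacity W * Real.log 2 + ∑ y, Real.negMulLog (W x0 y) := by
    intro x0 t ht ht1
    set R : Y → ℝ := fun y => (1 - t) * Q y + t * W x0 y with hR
    have hR0 : ∀ y, 0 ≤ R y := fun y => add_nonneg (mul_nonneg (by linarith) (hQ0 y))
      (mul_nonneg ht.le ((hW x0).1 y))
    have hR1 : ∑ y, R y = 1 := by
      simp only [hR, Finset.sum_add_distrib, ← Finset.mul_sum, hQ1, (hW x0).2]; ring
    have hPt : IsProbDist (fun x => (1 - t) * P x + t * (if x = x0 then 1 else 0)) := by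
      refine ⟨fun x => add_nonneg (mul_nonneg (by linarith) (hP.1 x))
        (mul_nonneg ht.le (by split_ifs <;> norm_num)), ?_⟩
      simp only [Finset.sum_add_distrib, ← Finset.mul_sum, hP.2]
      simp
    have hm := hmax _ hPt
    have e1 : ∀ g : X → ℝ, ∑ x, ((1 - t) * P x + t * (if x = x0 then 1 else 0)) * g x
        = (1 - t) * ∑ x, P x * g x + t * g x0 := by
      intro g
      simp only [add_mul, Finset.sum_add_distrib, mul_assoc, ← Finset.mul_sum]
      simp
    rw [← hC]
    simp only [JJ, e1] at hm ⊢
    have g1 : ∑ y, (Q y * Real.log (R y) + Real.negMulLog (Q y)) ≤ 0 := by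
      calc _ ≤ ∑ y, (R y - Q y) := by
            refine Finset.sum_le_sum fun y _ => gibbs_term _ _ (hQ0 y) (fun h => ?_) (hR0 y)
            exact add_pos_of_pos_of_nonneg (mul_pos (by linarith) h)
              (mul_nonneg ht.le ((hW x0).1 y))
        _ = 0 := by rw [Finset.sum_sub_distrib, hR1, hQ1, sub_self]
    rw [Finset.sum_add_distrib] at g1
    have g2 : ∑ y, Real.negMulLog (R y) = (1 - t) * (-∑ y, Q y * Real.log (R y))
        + t * ∑ y, W x0 y * (-Real.log (R y)) := by
      simp only [Finset.mul_sum, ← Finset.sum_neg_distrib, ← Finset.sum_add_distrib]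
      refine Finset.sum_congr rfl fun y _ => ?_
      simp only [Real.negMulLog]
      rw [show R y = (1 - t) * Q y + t * W x0 y from rfl]
      ring
    change ∑ y, Real.negMulLog (R y) - _ ≤ ∑ y, Real.negMulLog (Q y) - _ at hm
    rw [g2] at hm
    change ∑ y, W x0 y * (-Real.log (R y)) ≤ ∑ y, Real.negMulLog (Q y) - _ + _
    have g3 : (1 - t) * ∑ y, Real.negMulLog (Q y) ≤ (1 - t) * (-∑ y, Q y * Real.log (R y)) :=
      mul_le_mul_of_nonneg_left (by linarith) (by linarith)
    refine le_of_mul_le_mul_left ?_ ht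
    linarith
  have hWle : ∀ x y, W x y ≤ 1 := fun x y => by
    rw [← (hW x).2]
    exact Finset.single_le_sum (fun y _ => (hW x).1 y) (Finset.mem_univ y)
  have hQle : ∀ y, Q y ≤ 1 := fun y => by
    rw [← hQ1]
    exact Finset.single_le_sum (fun y _ => hQ0 y) (Finset.mem_univ y)
  have hac : ∀ x y, 0 < W x y → 0 < Q y := by
    intro x y hxy
    by_contra hcon
    have hq : Q y = 0 := le_antisymm (not_lt.1 hcon) (hQ0 y)
    set K := capacity W * Real.log 2 + ∑ y, Real.negMulLog (W x y) with hK
    have hb : ∀ t : ℝ, 0 < t → t < 1 → W x y * (-Real.log (t * W x y)) ≤ K := by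
      intro t ht ht1
      refine le_trans ?_ (key x t ht ht1)
      have := Finset.single_le_sum
        (f := fun y => W x y * (-Real.log ((1 - t) * Q y + t * W x y)))
        (fun z _ => mul_nonneg ((hW x).1 z) (neg_nonneg.2 (Real.log_nonpos
          (add_nonneg (mul_nonneg (by linarith) (hQ0 z)) (mul_nonneg ht.le ((hW x).1 z)))
          (by nlinarith [hWle x z, hQle z])))) (Finset.mem_univ y)
      simpa [hq] using this
    have hpos : 0 < Real.exp (-(|K| + 1) / W x y) := Real.exp_pos _
    have hlt : Real.exp (-(|K| + 1) / W x y) < 1 := by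
      rw [Real.exp_lt_one_iff]
      exact div_neg_of_neg_of_pos (by linarith [abs_nonneg K]) hxy
    have := hb _ hpos hlt
    rw [Real.log_mul hpos.ne' hxy.ne', Real.log_exp] at this
    have hl : Real.log (W x y) ≤ 0 := Real.log_nonpos hxy.le (hWle x y)
    have e : W x y * (-(-(|K| + 1) / W x y + Real.log (W x y)))
        = |K| + 1 + W x y * (- Real.log (W x y)) := by field_simp; ring
    rw [e] at this
    have := mul_nonneg hxy.le (neg_nonneg.2 hl)
    linarith [le_abs_self K]
  refine ⟨Q, ⟨hQ0, hQ1⟩, hac, fun x => ?_⟩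
  have hlim : Filter.Tendsto (fun t : ℝ => ∑ y, W x y * (-Real.log ((1 - t) * Q y + t * W x y)))
      (nhdsWithin 0 (Set.Ioi 0)) (nhds (∑ y, W x y * (-Real.log (Q y)))) := by
    refine tendsto_finsetSum _ fun y _ => ?_
    rcases ((hW x).1 y).eq_or_lt with h | h
    · simp [← h]
    · have hq := hac x y h
      refine Filter.Tendsto.mono_left ?_ nhdsWithin_le_nhds
      have : ContinuousAt (fun t : ℝ => W x y * (-Real.log ((1 - t) * Q y + t * W x y))) 0 := by
        refine ContinuousAt.mul continuousAt_const (ContinuousAt.neg (ContinuousAt.log ?_ ?_))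
        · fun_prop
        · simpa using hq.ne'
      simpa [ContinuousAt] using this
  have hle := le_of_tendsto hlim (b := capacity W * Real.log 2 + ∑ y, Real.negMulLog (W x y)) (by
    filter_upwards [Ioo_mem_nhdsGT (zero_lt_one' ℝ)] with t ht
    exact key x t ht.1 ht.2)
  have e : ∑ y, W x y * (Real.log (W x y) - Real.log (Q y))
      = ∑ y, W x y * (-Real.log (Q y)) - ∑ y, Real.negMulLog (W x y) := by
    rw [← Finset.sum_sub_distrib]
    refine Finset.sum_congr rfl fun y _ => ?_
    simp only [Real.negMulLog]; ring
  rw [e]; linarith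

lemma chernoff {X Y : Type*} [Fintype X] [Fintype Y] (W : X → Y → ℝ)
    (hW : ∀ x, IsProbDist (W x)) (Q : Y → ℝ) (hQ : ∀ y, 0 ≤ Q y) (hac : ∀ x y, 0 < W x y → 0 < Q y)
    (C : ℝ) (hC : ∀ x, ∑ y, W x y * (Real.log (W x y) - Real.log (Q y)) ≤ C)
    (δ : ℝ) (hδ : 0 < δ) :
    ∃ ρ : ℝ, 0 ≤ ρ ∧ ρ < 1 ∧ ∀ (n : ℕ) (x : Fin n → X),
      ∑ y : Fin n → Y, (if ∏ k, W (x k) (y k) ≤ Real.exp (n * (C + δ)) * ∏ k, Q (y k) then 0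
        else ∏ k, W (x k) (y k)) ≤ ρ ^ n := by
  classical
  set z : X → Y → ℝ := fun x y => Real.log (W x y) - Real.log (Q y) - (C + δ) with hz
  set B : ℝ := 1 + δ + ∑ x, ∑ y, |z x y| with hB
  have hsumnn : 0 ≤ ∑ x, ∑ y, |z x y| :=
    Finset.sum_nonneg fun _ _ => Finset.sum_nonneg fun _ _ => abs_nonneg _
  have hB1 : 1 ≤ B := by linarith
  have hBδ : δ ≤ B := by linarith
  have hzB : ∀ x y, |z x y| ≤ B := by
    intro x y
    have h1 := Finset.single_le_sum (f := fun y => |z x y|) (fun y _ => abs_nonneg _)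
      (Finset.mem_univ y)
    have h2 := Finset.single_le_sum (f := fun x => ∑ y, |z x y|)
      (fun x _ => Finset.sum_nonneg fun y _ => abs_nonneg _) (Finset.mem_univ x)
    linarith
  have hB0 : 0 < B := by linarith
  set s : ℝ := δ / (2 * B ^ 2) with hs
  have hs0 : 0 < s := by positivity
  have hsB : s * B ≤ 1 := by
    rw [hs, div_mul_eq_mul_div, div_le_one (by positivity)]
    nlinarith
  have hsB2 : s ^ 2 * B ^ 2 = s * δ / 2 := by rw [hs]; field_simp
  have hsδ : s * δ ≤ 1 := (mul_le_mul_of_nonneg_left hBδ hs0.le).trans hsB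
  have hphi : ∀ x, ∑ y, W x y * Real.exp (s * z x y) ≤ 1 - s * δ / 2 := by
    intro x
    have hb : ∀ y, Real.exp (s * z x y) ≤ 1 + s * z x y + s ^ 2 * B ^ 2 := by
      intro y
      have h1 : |s * z x y| ≤ 1 := by
        rw [abs_mul, abs_of_pos hs0]
        exact (mul_le_mul_of_nonneg_left (hzB x y) hs0.le).trans hsB
      have h2 := (abs_le.1 (Real.abs_exp_sub_one_sub_id_le h1)).2
      have h3 : (s * z x y) ^ 2 ≤ s ^ 2 * B ^ 2 := by
        rw [mul_pow]
        have : z x y ^ 2 ≤ B ^ 2 := sq_le_sq' (abs_le.1 (hzB x y)).1 (abs_le.1 (hzB x y)).2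
        gcongr
      linarith
    calc ∑ y, W x y * Real.exp (s * z x y)
        ≤ ∑ y, W x y * (1 + s * z x y + s ^ 2 * B ^ 2) :=
          Finset.sum_le_sum fun y _ => mul_le_mul_of_nonneg_left (hb y) ((hW x).1 y)
      _ = ∑ y, ((1 - s * (C + δ) + s ^ 2 * B ^ 2) * W x y
            + s * (W x y * (Real.log (W x y) - Real.log (Q y)))) := by
          refine Finset.sum_congr rfl fun y _ => ?_
          simp only [hz]; ring
      _ = (1 - s * (C + δ) + s ^ 2 * B ^ 2)
            + s * ∑ y, W x y * (Real.log (W x y) - Real.log (Q y)) := by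
          rw [Finset.sum_add_distrib, ← Finset.mul_sum, ← Finset.mul_sum, (hW x).2, mul_one]
      _ ≤ (1 - s * (C + δ) + s ^ 2 * B ^ 2) + s * C := by
          gcongr; exact hC x
      _ = _ := by rw [hsB2]; ring
  refine ⟨1 - s * δ / 2, by linarith, by have := mul_pos hs0 hδ; linarith, fun n x => ?_⟩
  have hterm : ∀ y : Fin n → Y,
      (if ∏ k, W (x k) (y k) ≤ Real.exp (n * (C + δ)) * ∏ k, Q (y k) then 0
        else ∏ k, W (x k) (y k)) ≤ ∏ k, (W (x k) (y k) * Real.exp (s * z (x k) (y k))) := by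
    intro y
    split_ifs with h
    · exact Finset.prod_nonneg fun k _ => mul_nonneg ((hW _).1 _) (Real.exp_pos _).le
    · rw [Finset.prod_mul_distrib]
      refine le_mul_of_one_le_right (Finset.prod_nonneg fun k _ => (hW _).1 _) ?_
      rw [← Real.exp_sum, ← Finset.mul_sum]
      refine Real.one_le_exp (mul_nonneg hs0.le ?_)
      by_cases hpos : ∀ k, 0 < W (x k) (y k)
      · have hq : ∀ k, 0 < Q (y k) := fun k => hac _ _ (hpos k)
        have hlt := Real.log_lt_log (mul_pos (Real.exp_pos _) (Finset.prod_pos fun k _ => hq k))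
          (not_le.1 h)
        rw [Real.log_mul (Real.exp_pos _).ne' (Finset.prod_pos fun k _ => hq k).ne', Real.log_exp,
          Real.log_prod fun k _ => (hq k).ne', Real.log_prod fun k _ => (hpos k).ne'] at hlt
        simp only [hz, Finset.sum_sub_distrib, Finset.sum_const, Finset.card_univ,
          Fintype.card_fin, nsmul_eq_mul]
        linarith
      · exfalso
        push Not at hpos
        obtain ⟨k, hk⟩ := hpos
        apply h
        have h0 : W (x k) (y k) = 0 := le_antisymm hk ((hW _).1 _)
        rw [Finset.prod_eq_zero (Finset.mem_univ k) h0]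
        exact mul_nonneg (Real.exp_pos _).le (Finset.prod_nonneg fun k _ => hQ _)
  calc _ ≤ ∑ y : Fin n → Y, ∏ k, (W (x k) (y k) * Real.exp (s * z (x k) (y k))) :=
        Finset.sum_le_sum fun y _ => hterm y
    _ = ∏ k, ∑ y, W (x k) y * Real.exp (s * z (x k) y) := by
        rw [Finset.prod_univ_sum, Fintype.piFinset_univ]
    _ ≤ ∏ _k : Fin n, (1 - s * δ / 2) :=
        Finset.prod_le_prod (fun k _ => Finset.sum_nonneg fun y _ =>
          mul_nonneg ((hW _).1 _) (Real.exp_pos _).le) fun k _ => hphi _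
    _ = _ := by simp

lemma prod_isProb {Y : Type*} [Fintype Y] (n : ℕ) (q : Fin n → Y → ℝ)
    (hq : ∀ k, IsProbDist (q k)) : IsProbDist (fun y : Fin n → Y => ∏ k, q k (y k)) := by
  classical
  refine ⟨fun y => Finset.prod_nonneg fun k _ => (hq k).1 _, ?_⟩
  have := Finset.prod_univ_sum (fun _ : Fin n => (Finset.univ : Finset Y)) q
  rw [Fintype.piFinset_univ] at this
  rw [← this]
  simp [(hq _).2]

/-- Resolvability: every output distribution is close to one from an `M`-type. -/
lemma resolv {A B : Type*} [Fintype A] [Fintype B] (P : A → ℝ) (hP : IsProbDist P)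
    (V : A → B → ℝ) (hV : ∀ a, IsProbDist (V a)) (Q : B → ℝ) (hQ : IsProbDist Q) (K : ℝ)
    (hK : 0 ≤ K) (η : ℝ) (hη : 0 ≤ η)
    (hat : ∀ a, ∑ b, (if V a b ≤ K * Q b then 0 else V a b) ≤ η) (M : ℕ) (hM : K ≤ η ^ 2 * M)
    (hM0 : 0 < M) :
    ∃ f : Fin M → A, ∀ D : Finset B,
      |(∑ i, ∑ b ∈ D, V (f i) b) / M - ∑ a, P a * ∑ b ∈ D, V a b| ≤ 2 * η := by
  classical
  have hMr : (0 : ℝ) < M := by exact_mod_cast hM0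
  set T : A → B → ℝ := fun a b => if V a b ≤ K * Q b then V a b else 0 with hT
  set U : A → B → ℝ := fun a b => if V a b ≤ K * Q b then 0 else V a b with hU
  have hTU : ∀ a b, V a b = T a b + U a b := by
    intro a b; simp only [hT, hU]; split_ifs <;> simp
  have hU0 : ∀ a b, 0 ≤ U a b := by
    intro a b; simp only [hU]; split_ifs
    · exact le_rfl
    · exact (hV a).1 b
  have hT0 : ∀ a b, 0 ≤ T a b := by
    intro a b; simp only [hT]; split_ifs
    · exact (hV a).1 b
    · exact le_rfl
  obtain ⟨f, hf⟩ := maurey_l1 P hP T Q K hK hT0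
    (fun a => by
      rw [← (hV a).2]
      exact Finset.sum_le_sum fun b _ => by linarith [hTU a b, hU0 a b])
    hQ (fun a b => by
      simp only [hT]; split_ifs with h
      · exact h
      · exact mul_nonneg hK (hQ.1 b)) M η hη hM hM0
  refine ⟨f, fun D => ?_⟩
  have hUD0 : ∀ a, 0 ≤ ∑ b ∈ D, U a b := fun a => Finset.sum_nonneg fun b _ => hU0 a b
  have hUD : ∀ a, ∑ b ∈ D, U a b ≤ η := fun a =>
    (Finset.sum_le_sum_of_subset_of_nonneg (Finset.subset_univ _)
      fun b _ _ => hU0 a b).trans (hat a)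
  have h1 : (∑ i, ∑ b ∈ D, V (f i) b) / M
      = (∑ b ∈ D, ∑ i, T (f i) b) / M + (∑ i, ∑ b ∈ D, U (f i) b) / M := by
    rw [Finset.sum_comm (s := D), ← add_div, ← Finset.sum_add_distrib]
    simp only [hTU, Finset.sum_add_distrib]
  have h2 : ∑ a, P a * ∑ b ∈ D, V a b
      = ∑ a, P a * ∑ b ∈ D, T a b + ∑ a, P a * ∑ b ∈ D, U a b := by
    rw [← Finset.sum_add_distrib]
    simp only [hTU, Finset.sum_add_distrib, mul_add]
  have h3 : 0 ≤ (∑ i, ∑ b ∈ D, U (f i) b) / M :=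
    div_nonneg (Finset.sum_nonneg fun i _ => hUD0 _) hMr.le
  have h4 : (∑ i, ∑ b ∈ D, U (f i) b) / M ≤ η := by
    rw [div_le_iff₀ hMr]
    calc _ ≤ ∑ _i : Fin M, η := Finset.sum_le_sum fun i _ => hUD _
      _ = _ := by simp [mul_comm]
  have h5 : 0 ≤ ∑ a, P a * ∑ b ∈ D, U a b :=
    Finset.sum_nonneg fun a _ => mul_nonneg (hP.1 a) (hUD0 a)
  have h6 : ∑ a, P a * ∑ b ∈ D, U a b ≤ η := by
    calc _ ≤ ∑ a, P a * η := Finset.sum_le_sum fun a _ => mul_le_mul_of_nonneg_left (hUD a) (hP.1 a)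
      _ = η := by rw [← Finset.sum_mul, hP.2, one_mul]
  have h7 := abs_le.1 (hf D)
  rw [h1, h2, abs_le]
  constructor <;> linarith [h7.1, h7.2]

theorem stmt1 {X Y : Type*} [Fintype X] [Fintype Y] [DecidableEq Y] [Nonempty X] [Nonempty Y]
    (W : X → Y → ℝ) (hW : ∀ x, IsProbDist (W x))
    (lam1 lam2 : ℝ) (h1 : 0 < lam1) (h2 : 0 < lam2) (hsum : lam1 + lam2 < 1)
    (δ : ℝ) (hδ : 0 < δ) :
    ∃ n₀ : ℕ, ∀ n ≥ n₀, ∀ N : ℕ,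
      ∀ (P : Fin N → (Fin n → X) → ℝ) (D : Fin N → Finset (Fin n → Y)),
        IsIDCode W n N lam1 lam2 P D →
        (N:ℝ) ≤ (2:ℝ) ^ ((2:ℝ) ^ ((n:ℝ) * (capacity W + δ))) := by
  classical
  obtain ⟨Q, hQ, hac, hD⟩ := kkt W hW
  have hl : 0 < Real.log 2 := Real.log_pos one_lt_two
  set C' : ℝ := capacity W * Real.log 2 with hC'
  set d : ℝ := δ * Real.log 2 / 2 with hd
  have hd0 : 0 < d := by positivity
  have hC0 : 0 ≤ C' := by
    refine le_trans ?_ (hD (Classical.arbitrary X))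
    set x := Classical.arbitrary X
    have h : ∑ y, (W x y * Real.log (Q y) + Real.negMulLog (W x y)) ≤ ∑ y, (Q y - W x y) :=
      Finset.sum_le_sum fun y _ => gibbs_term _ _ ((hW x).1 y) (hac x y) (hQ.1 y)
    rw [Finset.sum_sub_distrib, hQ.2, (hW x).2, sub_self] at h
    have e : ∑ y, W x y * (Real.log (W x y) - Real.log (Q y))
        = -∑ y, (W x y * Real.log (Q y) + Real.negMulLog (W x y)) := by
      rw [← Finset.sum_neg_distrib]
      refine Finset.sum_congr rfl fun y _ => ?_
      simp only [Real.negMulLog]; ring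
    rw [e]; linarith
  obtain ⟨ρ, hρ0, hρ1, hρ⟩ := chernoff W hW Q hQ.1 hac C' hD d hd0
  set η : ℝ := (1 - lam1 - lam2) / 8 with hη
  have hη0 : 0 < η := by rw [hη]; linarith
  set c : ℝ := Real.logb 2 (Fintype.card X) * (1 / η ^ 2 + 1) with hc
  have ev1 : ∀ᶠ n : ℕ in Filter.atTop, ρ ^ n ≤ η :=
    ((tendsto_pow_atTop_nhds_zero_of_lt_one hρ0 hρ1).eventually_lt_const hη0).mono
      fun _ h => h.le
  have ev2 : ∀ᶠ n : ℕ in Filter.atTop, c * n ≤ Real.exp (n * d) := by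
    have h1 : Filter.Tendsto (fun n : ℕ => (n : ℝ) * d) Filter.atTop Filter.atTop :=
      tendsto_natCast_atTop_atTop.atTop_mul_const hd0
    have h2 := ((Real.tendsto_exp_div_pow_atTop 1).comp h1).eventually_ge_atTop (c / d)
    filter_upwards [h2, Filter.eventually_gt_atTop 0] with n hn hn0
    have hn0' : (0 : ℝ) < n := by exact_mod_cast hn0
    simp only [Function.comp, pow_one] at hn
    rw [div_le_div_iff₀ hd0 (by positivity)] at hn
    refine le_of_mul_le_mul_right ?_ hd0
    linarith
  obtain ⟨n₀, hn₀⟩ := Filter.eventually_atTop.1 (ev1.and ev2)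
  refine ⟨n₀, fun n hn N P D hcode => ?_⟩
  obtain ⟨hn1, hn2⟩ := hn₀ n hn
  obtain ⟨hP, hE1, hE2⟩ := hcode
  set K : ℝ := Real.exp (n * (C' + d)) with hK
  have hK1 : 1 ≤ K := Real.one_le_exp (by positivity)
  set M : ℕ := ⌈K / η ^ 2⌉₊ with hM
  have hMge : K / η ^ 2 ≤ M := Nat.le_ceil _
  have hMlt : (M : ℝ) < K / η ^ 2 + 1 := Nat.ceil_lt_add_one (by positivity)
  have hM0 : 0 < M := Nat.ceil_pos.2 (by positivity)
  have hMK : K ≤ η ^ 2 * M := by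
    rw [div_le_iff₀ (by positivity)] at hMge
    linarith
  have hVp : ∀ xn : Fin n → X, IsProbDist (fun yn : Fin n → Y => ∏ k, W (xn k) (yn k)) :=
    fun xn => prod_isProb n (fun k => W (xn k)) fun k => hW _
  have hQp : IsProbDist (fun yn : Fin n → Y => ∏ k, Q (yn k)) :=
    prod_isProb n (fun _ => Q) fun _ => hQ
  have hres := fun i => resolv (P i) (hP i)
    (fun (xn : Fin n → X) (yn : Fin n → Y) => ∏ k, W (xn k) (yn k)) hVp
    (fun yn => ∏ k, Q (yn k)) hQp K (by linarith) η hη0.le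
    (fun xn => (hρ n xn).trans hn1) M hMK hM0
  choose f hf using hres
  have hinj : Function.Injective f := by
    intro i j hij
    by_contra hne
    have a1 := abs_le.1 (hf i (D i))
    have a2 := abs_le.1 (hf j (D i))
    rw [hij] at a1
    have a3 := hE2 i j hne
    have a4 := hE1 i
    have a5 : ∑ xn : Fin n → X, P i xn * ∑ yn ∈ (D i)ᶜ, ∏ k, W (xn k) (yn k)
        + ∑ xn : Fin n → X, P i xn * ∑ yn ∈ D i, ∏ k, W (xn k) (yn k) = 1 := by
      rw [← Finset.sum_add_distrib, ← (hP i).2]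
      refine Finset.sum_congr rfl fun xn _ => ?_
      rw [← mul_add, Finset.sum_compl_add_sum, (hVp xn).2, mul_one]
    have a6 : 8 * η = 1 - lam1 - lam2 := by rw [hη]; ring
    linarith [a1.1, a1.2, a2.1, a2.2]
  have hcard := Fintype.card_le_of_injective f hinj
  simp only [Fintype.card_fin, Fintype.card_pi, Finset.prod_const, Finset.card_univ] at hcard
  have hX : 1 ≤ Fintype.card X := Fintype.card_pos
  have hXr : (1 : ℝ) ≤ Fintype.card X := by exact_mod_cast hX
  set L : ℝ := Real.logb 2 (Fintype.card X) with hL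
  have hL0 : 0 ≤ L := Real.logb_nonneg one_lt_two hXr
  have hXL : (Fintype.card X : ℝ) = (2 : ℝ) ^ L :=
    (Real.rpow_logb (by norm_num) (by norm_num) (by linarith)).symm
  have hNr : (N : ℝ) ≤ (2 : ℝ) ^ (L * n * M) := by
    calc (N : ℝ) ≤ ((Fintype.card X : ℝ) ^ n) ^ M := by exact_mod_cast hcard
      _ = _ := by
        rw [hXL, ← pow_mul, ← Real.rpow_natCast, ← Real.rpow_mul (by norm_num)]
        push_cast
        rw [mul_assoc]
  refine hNr.trans (Real.rpow_le_rpow_of_exponent_le (by norm_num) ?_)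
  have hgoal : (2 : ℝ) ^ ((n : ℝ) * (capacity W + δ)) = Real.exp (n * d) * K := by
    rw [Real.rpow_def_of_pos (by norm_num), hK, ← Real.exp_add]
    congr 1
    rw [hC', hd]; ring
  rw [hgoal]
  calc L * n * M ≤ L * n * ((1 / η ^ 2 + 1) * K) := by
        refine mul_le_mul_of_nonneg_left ?_ (by positivity)
        have : (1 / η ^ 2 + 1) * K = K / η ^ 2 + K := by ring
        linarith
    _ = (c * n) * K := by rw [hc]; ring
    _ ≤ _ := mul_le_mul_of_nonneg_right hn2 (by linarith)


/-! Quantum definitions -/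
end

section
/- Let λ₁, λ₂ > 0 with λ₁ + λ₂ < 1. Then for every δ > 0 there exists n₀ such that for all n ≥ n₀, the maximal size of (not necessarily simultaneous) quantum identification codes satisfies N(n, λ₁, λ₂) ≤ 2^(2^(n(C(W) + δ))). -/
open scoped BigOperators
open ComplexOrder
open scoped Matrix

noncomputable def vnEntropy {m : Type*} [Fintype m] [DecidableEq m] (ρ : Matrix m m ℂ) : ℝ :=
  if h : ρ.IsHermitian then -∑ i, h.eigenvalues i * Real.logb 2 (h.eigenvalues i) else 0

def IsDensity {m : Type*} [Fintype m] [DecidableEq m] (ρ : Matrix m m ℂ) : Prop :=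
  ρ.PosSemidef ∧ ρ.trace = 1

noncomputable def qMutualInfo {X : Type*} [Fintype X] {d : ℕ}
    (P : X → ℝ) (W : X → Matrix (Fin d) (Fin d) ℂ) : ℝ :=
  vnEntropy (∑ x, (P x : ℂ) • W x) - ∑ x, P x * vnEntropy (W x)

noncomputable def qCapacity {X : Type*} [Fintype X] {d : ℕ}
    (W : X → Matrix (Fin d) (Fin d) ℂ) : ℝ :=
  sSup {c | ∃ P : X → ℝ, IsProbDist P ∧ c = qMutualInfo P W}

/-- The block (tensor-power) channel. -/
def Wblock {X : Type*} {d : ℕ} (W : X → Matrix (Fin d) (Fin d) ℂ) (n : ℕ)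
    (xn : Fin n → X) : Matrix (Fin n → Fin d) (Fin n → Fin d) ℂ :=
  Matrix.of fun i j => ∏ k, W (xn k) (i k) (j k)

def IsQIDCode {X : Type*} [Fintype X] {d : ℕ} (W : X → Matrix (Fin d) (Fin d) ℂ)
    (n N : ℕ) (lam1 lam2 : ℝ) (P : Fin N → (Fin n → X) → ℝ)
    (D : Fin N → Matrix (Fin n → Fin d) (Fin n → Fin d) ℂ) : Prop :=
  (∀ i, IsProbDist (P i)) ∧
  (∀ i, (D i).PosSemidef ∧ (1 - D i).PosSemidef) ∧
  (∀ i, ((∑ xn : Fin n → X, (P i xn : ℂ) • Wblock W n xn) * (1 - D i)).trace.re ≤ lam1) ∧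
  (∀ i j, i ≠ j →
    ((∑ xn : Fin n → X, (P j xn : ℂ) • Wblock W n xn) * D i).trace.re ≤ lam2)

section helpers
open Matrix Finset
set_option linter.unusedSectionVars false

variable {J : Type*} [Fintype J] [DecidableEq J]

noncomputable def hs {I J : Type*} [Fintype I] [Fintype J] (A : Matrix I J ℂ) : ℝ :=
  ∑ i, ∑ j, ‖A i j‖ ^ 2

lemma hs_nonneg (A : Matrix J J ℂ) : 0 ≤ hs A := by unfold hs; positivity

lemma hs_conj (A : Matrix J J ℂ) : hs Aᴴ = hs A := by
  unfold hs
  rw [Finset.sum_comm]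
  simp [Matrix.conjTranspose_apply]

lemma hs_eq_trace (A : Matrix J J ℂ) : hs A = (Aᴴ * A).trace.re := by
  unfold hs
  rw [Finset.sum_comm]
  simp only [Matrix.trace, Matrix.diag, Matrix.mul_apply, Matrix.conjTranspose_apply, Complex.re_sum]
  refine Finset.sum_congr rfl fun i _ => Finset.sum_congr rfl fun j _ => ?_
  rw [← Complex.normSq_eq_norm_sq, Complex.normSq_apply]
  simp

lemma hs_unitary_left (U A : Matrix J J ℂ) (h : Uᴴ * U = 1) : hs (U * A) = hs A := by
  rw [hs_eq_trace, hs_eq_trace, Matrix.conjTranspose_mul]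
  congr 2
  rw [Matrix.mul_assoc, ← Matrix.mul_assoc Uᴴ, h, Matrix.one_mul]

lemma hs_unitary_right (A U : Matrix J J ℂ) (h : U * Uᴴ = 1) : hs (A * U) = hs A := by
  rw [← hs_conj, Matrix.conjTranspose_mul, hs_unitary_left, hs_conj]
  simpa using h

lemma norm_sum_mul_sq {ι : Type*} [Fintype ι] (a b : ι → ℂ) :
    ‖∑ i, a i * b i‖ ^ 2 ≤ (∑ i, ‖a i‖ ^ 2) * ∑ i, ‖b i‖ ^ 2 := by
  calc ‖∑ i, a i * b i‖ ^ 2 ≤ (∑ i, ‖a i‖ * ‖b i‖) ^ 2 := by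
        gcongr
        exact (norm_sum_le _ _).trans (by simp)
    _ ≤ _ := Finset.sum_mul_sq_le_sq_mul_sq _ _ _

lemma trace_sq_le (A B : Matrix J J ℂ) : ‖(A * B).trace‖ ^ 2 ≤ hs A * hs B := by
  have := norm_sum_mul_sq (fun p : J × J => A p.1 p.2) (fun p : J × J => B p.2 p.1)
  simp only [Fintype.sum_prod_type] at this
  rw [← hs_conj B]
  simpa [hs, Matrix.trace, Matrix.mul_apply] using this

lemma contr_col (D A : Matrix J J ℂ) (h0 : D.PosSemidef) (h1 : (1 - D).PosSemidef) (j : J) :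
    ∑ b, ‖(D * A) b j‖ ^ 2 ≤ ∑ b, ‖A b j‖ ^ 2 := by
  have hD : Dᴴ = D := h0.1
  have key : (1 - D * D).PosSemidef := by
    have e1 := h1.conjTranspose_mul_mul_same D
    have e2 := h0.conjTranspose_mul_mul_same (1 - D)
    have e := h1.add (e1.add e2)
    convert e using 1
    simp only [Matrix.conjTranspose_sub, Matrix.conjTranspose_one, hD]
    noncomm_ring
  have k2 := key.conjTranspose_mul_mul_same A
  have k3 := k2.diag_nonneg (i := j)
  have e : Aᴴ * (1 - D * D) * A = Aᴴ * A - (D * A)ᴴ * (D * A) := by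
    rw [Matrix.conjTranspose_mul, hD]; noncomm_ring
  rw [e] at k3
  have hh : ∀ C : Matrix J J ℂ, ((Cᴴ * C) j j).re = ∑ b, ‖C b j‖ ^ 2 := by
    intro C
    simp only [Matrix.mul_apply, Matrix.conjTranspose_apply, Complex.re_sum]
    refine Finset.sum_congr rfl fun j _ => ?_
    rw [← Complex.normSq_eq_norm_sq, Complex.normSq_apply]
    simp
  have k4 := (Complex.le_def.1 k3).1
  rw [Matrix.sub_apply, Complex.sub_re, hh, hh] at k4
  simp at k4
  linarith

lemma hs_contr (D A : Matrix J J ℂ) (h0 : D.PosSemidef) (h1 : (1 - D).PosSemidef) :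
    hs (D * A) ≤ hs A := by
  unfold hs
  rw [Finset.sum_comm, Finset.sum_comm (γ := J) (f := fun i j => ‖A i j‖ ^ 2)]
  exact Finset.sum_le_sum fun j _ => contr_col D A h0 h1 j

lemma hs_diag (h : J → ℂ) : hs (Matrix.diagonal h) = ∑ j, ‖h j‖ ^ 2 := by
  unfold hs
  refine Finset.sum_congr rfl fun i _ => ?_
  rw [Finset.sum_eq_single i]
  · simp
  · intro b _ hb; simp [Matrix.diagonal_apply_ne _ hb.symm]
  · simp

/-- tensor product -/
def tens {n : ℕ} {m : Type*} (A : Fin n → Matrix m m ℂ) : Matrix (Fin n → m) (Fin n → m) ℂ :=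
  Matrix.of fun i j => ∏ k, A k (i k) (j k)

lemma tens_mul {n : ℕ} {m : Type*} [Fintype m] [DecidableEq m] (A B : Fin n → Matrix m m ℂ) :
    tens A * tens B = tens (fun k => A k * B k) := by
  ext i j
  simp only [tens, Matrix.mul_apply, Matrix.of_apply]
  rw [Finset.prod_univ_sum]
  simp [Finset.prod_mul_distrib]

lemma tens_conj {n : ℕ} {m : Type*} (A : Fin n → Matrix m m ℂ) :
    (tens A)ᴴ = tens (fun k => (A k)ᴴ) := by
  ext i j
  simp [tens]

lemma tens_diag {n : ℕ} {m : Type*} [DecidableEq m] (a : Fin n → m → ℂ) :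
    tens (fun k => Matrix.diagonal (a k)) = Matrix.diagonal (fun i => ∏ k, a k (i k)) := by
  ext i j
  simp only [tens, Matrix.of_apply]
  by_cases h : i = j
  · subst h; simp
  · rw [Matrix.diagonal_apply_ne _ h]
    obtain ⟨k, hk⟩ := Function.ne_iff.1 h
    exact Finset.prod_eq_zero (Finset.mem_univ k) (Matrix.diagonal_apply_ne _ hk)

lemma tens_one {n : ℕ} {m : Type*} [DecidableEq m] :
    tens (fun _ : Fin n => (1 : Matrix m m ℂ)) = 1 := by
  have := tens_diag (n := n) (m := m) (fun _ _ => 1)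
  simpa using this

lemma greedy {E ι : Type*} [NormedAddCommGroup E] [InnerProductSpace ℂ E] [Fintype ι]
    (p : ι → ℝ) (hp : IsProbDist p) (v : ι → E) (B : ℝ) (hB : ∀ i, ‖v i‖ ^ 2 ≤ B) (M : ℕ) :
    ∃ s : Fin M → ι, ‖∑ k, v (s k) - (M : ℂ) • ∑ i, (p i : ℂ) • v i‖ ^ 2 ≤ M * B := by
  set m := ∑ i, (p i : ℂ) • v i with hm
  have hpc : ∑ i, (p i : ℂ) = 1 := by exact_mod_cast congrArg (fun x : ℝ => (x : ℂ)) hp.2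
  have step : ∀ S : E, ∃ i, ‖S + (v i - m)‖ ^ 2 ≤ ‖S‖ ^ 2 + B := by
    intro S
    by_contra! hcon
    have hne : ∃ i, 0 < p i := by
      by_contra! h
      have : ∑ i, p i ≤ 0 := Finset.sum_nonpos fun i _ => h i
      linarith [hp.2]
    have h1 : ∑ i, p i * (‖S‖ ^ 2 + B) < ∑ i, p i * ‖S + (v i - m)‖ ^ 2 := by
      obtain ⟨i0, hi0⟩ := hne
      refine Finset.sum_lt_sum (fun i _ => ?_) ⟨i0, Finset.mem_univ _, ?_⟩
      · exact mul_le_mul_of_nonneg_left (hcon i).le (hp.1 i)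
      · exact mul_lt_mul_of_pos_left (hcon i0) hi0
    have h2 : ∑ i, p i * ‖S + (v i - m)‖ ^ 2
        = ‖S‖ ^ 2 - 2 * (inner ℂ S m).re + ‖m‖ ^ 2 + 2 * (inner ℂ (S - m) m).re + ∑ i, p i * ‖v i‖ ^ 2 := by
      have e : ∀ i, p i * ‖S + (v i - m)‖ ^ 2
          = p i * (‖S - m‖ ^ 2) + 2 * (inner ℂ (S - m) ((p i : ℂ) • v i)).re + p i * ‖v i‖ ^ 2 := by
        intro i
        have : S + (v i - m) = (S - m) + v i := by abel
        rw [this, norm_add_sq (𝕜 := ℂ), inner_smul_right, Complex.re_ofReal_mul]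
        simp only [RCLike.re_to_complex]
        ring
      simp_rw [e]
      rw [Finset.sum_add_distrib, Finset.sum_add_distrib, ← Finset.sum_mul, hp.2, ← Finset.mul_sum,
        ← Complex.re_sum, ← inner_sum, ← hm, norm_sub_sq (𝕜 := ℂ)]
      simp only [RCLike.re_to_complex]
      ring
    have h3 : ∑ i, p i * ‖v i‖ ^ 2 ≤ B := by
      calc _ ≤ ∑ i, p i * B := Finset.sum_le_sum fun i _ => mul_le_mul_of_nonneg_left (hB i) (hp.1 i)
        _ = B := by rw [← Finset.sum_mul, hp.2, one_mul]
    rw [← Finset.sum_mul, hp.2, one_mul, h2, inner_sub_left, Complex.sub_re] at h1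
    have h4 : (inner ℂ m m : ℂ).re = ‖m‖ ^ 2 := by
      have := inner_self_eq_norm_sq (𝕜 := ℂ) m
      simpa using this
    rw [h4] at h1
    nlinarith [sq_nonneg ‖m‖]
  induction M with
  | zero => exact ⟨Fin.elim0, by simp⟩
  | succ M ih =>
    obtain ⟨s, hs⟩ := ih
    obtain ⟨i, hi⟩ := step (∑ k, v (s k) - (M : ℂ) • m)
    refine ⟨Fin.snoc s i, ?_⟩
    rw [Fin.sum_univ_castSucc]
    simp only [Fin.snoc_castSucc, Fin.snoc_last]
    have : ∑ k, v (s k) + v i - ((M + 1 : ℕ) : ℂ) • m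
        = ∑ k, v (s k) - (M : ℂ) • m + (v i - m) := by
      push_cast; rw [add_smul, one_smul]; abel
    rw [this]
    push_cast
    linarith

end helpers
section helpers2
open Matrix Finset
set_option linter.unusedSectionVars false

lemma var_prod {ι : Type*} [Fintype ι] (n : ℕ) : ∀ (p g : Fin n → ι → ℝ) (c : ℝ)
    (_ : ∀ k, ∑ i, p k i = 1) (_ : ∀ k, ∑ i, p k i * g k i = 0),
    ∑ l : Fin n → ι, (∏ k, p k (l k)) * (c + ∑ k, g k (l k)) ^ 2
      = c ^ 2 + ∑ k, ∑ i, p k i * g k i ^ 2 := by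
  induction n with
  | zero => intro p g c _ _; simp
  | succ n ih =>
    intro p g c hp hg
    rw [← (Fin.consEquiv (fun _ => ι)).sum_comp, Fintype.sum_prod_type]
    simp only [Fin.consEquiv_apply, Fin.prod_univ_succ, Fin.sum_univ_succ, Fin.cons_zero, Fin.cons_succ]
    have : ∀ x : ι, ∑ y : Fin n → ι, p 0 x * (∏ i, p i.succ (y i)) * (c + (g 0 x + ∑ i, g i.succ (y i))) ^ 2
        = p 0 x * (c ^ 2 + ∑ k : Fin n, ∑ i, p k.succ i * g k.succ i ^ 2) + (2 * c) * (p 0 x * g 0 x)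
          + p 0 x * g 0 x ^ 2 := by
      intro x
      have := ih (fun k => p k.succ) (fun k => g k.succ) (c + g 0 x) (fun k => hp _) (fun k => hg _)
      simp only [← add_assoc, mul_assoc]
      rw [← Finset.mul_sum, this]
      ring
    simp_rw [this]
    rw [Finset.sum_add_distrib, Finset.sum_add_distrib, ← Finset.sum_mul, ← Finset.mul_sum, hp, hg]
    ring

lemma cheb {ι : Type*} [Fintype ι] {n : ℕ} (p f : Fin n → ι → ℝ) (hp : ∀ k, IsProbDist (p k))
    (K t : ℝ) (ht : 0 < t) (hK : ∑ k, ∑ i, p k i * f k i ^ 2 ≤ K) (S : Finset (Fin n → ι))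
    (hS : ∀ l ∈ S, ∏ k, p k (l k) ≠ 0 → t ≤ |∑ k, f k (l k) - ∑ k, ∑ i, p k i * f k i|) :
    ∑ l ∈ S, ∏ k, p k (l k) ≤ K / t ^ 2 := by
  have hnn : ∀ l : Fin n → ι, 0 ≤ ∏ k, p k (l k) := fun l => Finset.prod_nonneg fun k _ => (hp k).1 _
  obtain ⟨μ, hμ⟩ : ∃ μ : Fin n → ℝ, ∀ k, ∑ i, p k i * f k i = μ k := ⟨_, fun k => rfl⟩
  simp only [hμ] at hS
  have hv := var_prod n p (fun k i => f k i - μ k) 0 (fun k => (hp k).2) (by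
    intro k
    simp only [mul_sub, Finset.sum_sub_distrib, ← Finset.sum_mul, (hp k).2]
    simp [hμ k])
  have hb : ∑ k, ∑ i, p k i * (f k i - μ k) ^ 2 ≤ K := by
    refine le_trans (Finset.sum_le_sum fun k _ => ?_) hK
    have : ∀ i, p k i * (f k i - μ k) ^ 2 = p k i * f k i ^ 2 - 2 * μ k * (p k i * f k i) + p k i * μ k ^ 2 := by
      intro i; ring
    simp_rw [this]
    rw [Finset.sum_add_distrib, Finset.sum_sub_distrib, ← Finset.sum_mul, ← Finset.mul_sum, (hp k).2]
    rw [hμ k]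
    have := sq_nonneg (μ k)
    linarith
  rw [le_div_iff₀ (pow_pos ht 2), Finset.sum_mul]
  have a1 : ∑ l ∈ S, (∏ k, p k (l k)) * t ^ 2
      ≤ ∑ l ∈ S, (∏ k, p k (l k)) * (0 + ∑ k, (f k (l k) - μ k)) ^ 2 := by
    refine Finset.sum_le_sum fun l hl => ?_
    by_cases h0 : ∏ k, p k (l k) = 0
    · rw [h0, zero_mul, zero_mul]
    · have h3 := hS l hl h0
      rw [← Finset.sum_sub_distrib] at h3
      have h4 : t ^ 2 ≤ (0 + ∑ k, (f k (l k) - μ k)) ^ 2 := by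
        rw [zero_add, ← sq_abs (∑ k, (f k (l k) - μ k))]
        exact pow_le_pow_left₀ ht.le h3 2
      exact mul_le_mul_of_nonneg_left h4 (hnn l)
  have a2 : ∑ l ∈ S, (∏ k, p k (l k)) * (0 + ∑ k, (f k (l k) - μ k)) ^ 2
      ≤ ∑ l : Fin n → ι, (∏ k, p k (l k)) * (0 + ∑ k, (f k (l k) - μ k)) ^ 2 :=
    Finset.sum_le_sum_of_subset_of_nonneg (Finset.subset_univ _)
      (fun l _ _ => mul_nonneg (hnn l) (sq_nonneg _))
  rw [hv] at a2
  refine a1.trans (a2.trans ?_)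
  rw [zero_pow two_ne_zero, zero_add]
  exact hb

lemma spec {d : ℕ} (ρ : Matrix (Fin d) (Fin d) ℂ) (h : IsDensity ρ) :
    ∃ (U : Matrix (Fin d) (Fin d) ℂ) (r : Fin d → ℝ), Uᴴ * U = 1 ∧ U * Uᴴ = 1 ∧
      ρ = U * Matrix.diagonal (fun i => (r i : ℂ)) * Uᴴ ∧ IsProbDist r ∧
      vnEntropy ρ = - ∑ i, r i * Real.logb 2 (r i) := by
  have hh := h.1.1
  refine ⟨hh.eigenvectorUnitary, hh.eigenvalues, ?_, ?_, ?_, ⟨fun i => h.1.eigenvalues_nonneg i, ?_⟩, ?_⟩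
  · exact Unitary.coe_star_mul_self _
  · exact Unitary.coe_mul_star_self _
  · conv_lhs => rw [hh.spectral_theorem]
    rfl
  · have := hh.trace_eq_sum_eigenvalues
    rw [h.2] at this
    have h2 : ((∑ i, hh.eigenvalues i : ℝ) : ℂ) = ((1 : ℝ) : ℂ) := by
      rw [Complex.ofReal_sum, Complex.ofReal_one]; exact this.symm
    exact Complex.ofReal_injective h2
  · simp [vnEntropy, hh]

lemma xlogsq (q : ℝ) (h0 : 0 ≤ q) (h1 : q ≤ 1) : q * Real.logb 2 q ^ 2 ≤ 4 / Real.log 2 ^ 2 := by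
  have hl : 0 < Real.log 2 := Real.log_pos (by norm_num)
  rw [Real.logb, div_pow, ← mul_div_assoc]
  gcongr
  rcases h0.eq_or_lt with h | h
  · rw [← h]; simp
  have hs : 0 < √q := Real.sqrt_pos.2 h
  have e : Real.log (1 / √q) ≤ 1 / √q - 1 := Real.log_le_sub_one_of_pos (by positivity)
  rw [Real.log_div one_ne_zero hs.ne', Real.log_one, Real.log_sqrt h0] at e
  have e2 : √q * (-Real.log q) ≤ 2 := by
    have : √q * (1 / √q) = 1 := by field_simp
    nlinarith
  have e3 : 0 ≤ √q * (-Real.log q) := mul_nonneg hs.le (by linarith [Real.log_nonpos h0 h1])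
  calc q * Real.log q ^ 2 = (√q * (-Real.log q)) ^ 2 := by rw [mul_pow, Real.sq_sqrt h0]; ring
    _ ≤ 2 ^ 2 := by gcongr
    _ = 4 := by norm_num

variable {J : Type*} [Fintype J] [DecidableEq J]

noncomputable def ind (G : Finset J) : Matrix J J ℂ := Matrix.diagonal fun j => if j ∈ G then 1 else 0

noncomputable def Lm (V : Matrix J J ℂ) (r : J → ℝ) : Matrix J J ℂ :=
  V * Matrix.diagonal fun j => (√(r j) : ℂ)

lemma Lm_mul (V : Matrix J J ℂ) (r : J → ℝ) (hr : ∀ j, 0 ≤ r j) :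
    Lm V r * (Lm V r)ᴴ = V * Matrix.diagonal (fun j => (r j : ℂ)) * Vᴴ := by
  unfold Lm
  rw [Matrix.conjTranspose_mul, Matrix.diagonal_conjTranspose, Matrix.mul_assoc, ← Matrix.mul_assoc
    (Matrix.diagonal _) (Matrix.diagonal _), Matrix.diagonal_mul_diagonal, ← Matrix.mul_assoc]
  congr 3
  ext j
  simp only [Pi.star_apply, RCLike.star_def, Complex.conj_ofReal]
  rw [← Complex.ofReal_mul, Real.mul_self_sqrt (hr j)]

lemma ind_compl (G : Finset J) : ind Gᶜ = 1 - ind G := by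
  unfold ind
  rw [← Matrix.diagonal_one, Matrix.diagonal_sub]
  congr 1
  ext j
  by_cases h : j ∈ G <;> simp [h]

lemma hs_ind_left (G : Finset J) (A : Matrix J J ℂ) :
    hs (ind G * A) = ∑ i ∈ G, ∑ j, ‖A i j‖ ^ 2 := by
  unfold hs ind
  simp only [Matrix.diagonal_mul]
  rw [← Finset.sum_filter_add_sum_filter_not univ (· ∈ G)]
  rw [Finset.sum_eq_zero (s := univ.filter (fun i => ¬ i ∈ G))]
  · rw [add_zero]
    have : univ.filter (· ∈ G) = G := by ext; simp
    rw [this]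
    refine Finset.sum_congr rfl fun i hi => ?_
    simp [hi]
  · intro i hi
    simp at hi
    simp [hi]

lemma hs_ind_left_le (G : Finset J) (A : Matrix J J ℂ) : hs (ind G * A) ≤ hs A := by
  rw [hs_ind_left]
  exact Finset.sum_le_sum_of_subset_of_nonneg (Finset.subset_univ _) (fun _ _ _ => by positivity)

lemma ind_conj (G : Finset J) : (ind G)ᴴ = ind G := by
  unfold ind
  rw [Matrix.diagonal_conjTranspose]
  congr 1
  ext j
  by_cases h : j ∈ G <;> simp [h]

lemma hs_ind_right_le (G : Finset J) (A : Matrix J J ℂ) : hs (A * ind G) ≤ hs A := by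
  rw [← hs_conj, Matrix.conjTranspose_mul, ind_conj, ← hs_conj A]
  exact hs_ind_left_le _ _

lemma hs_Lm_ind (V : Matrix J J ℂ) (hV : Vᴴ * V = 1) (r : J → ℝ) (hr : ∀ j, 0 ≤ r j) (G : Finset J) :
    hs (Lm V r * ind G) = ∑ j ∈ G, r j := by
  unfold Lm ind
  rw [Matrix.mul_assoc, hs_unitary_left _ _ hV, Matrix.diagonal_mul_diagonal, hs_diag]
  rw [← Finset.sum_filter_add_sum_filter_not univ (· ∈ G)]
  rw [Finset.sum_eq_zero (s := univ.filter (fun i => ¬ i ∈ G))]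
  · rw [add_zero]
    have : univ.filter (· ∈ G) = G := by ext; simp
    rw [this]
    refine Finset.sum_congr rfl fun i hi => ?_
    simp [hi, Real.sq_sqrt (hr i)]
  · intro i hi
    simp at hi
    simp [hi]

lemma hs_Lm (V : Matrix J J ℂ) (hV : Vᴴ * V = 1) (r : J → ℝ) (hr : ∀ j, 0 ≤ r j) :
    hs (Lm V r) = ∑ j, r j := by
  rw [← hs_Lm_ind V hV r hr univ]
  congr 1
  simp [ind]

noncomputable def Wp (U L : Matrix J J ℂ) (G G' : Finset J) : Matrix J J ℂ :=
  U * ind G * (Uᴴ * L * ind G' * Lᴴ)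

lemma lemA (U V D : Matrix J J ℂ) (r : J → ℝ) (hU : Uᴴ * U = 1) (hU' : U * Uᴴ = 1)
    (hV : Vᴴ * V = 1) (hr : IsProbDist r) (h0 : D.PosSemidef) (h1 : (1 - D).PosSemidef)
    (G G' : Finset J) (ε : ℝ) (hG' : ∑ j ∈ G'ᶜ, r j ≤ ε ^ 2) (hε : 0 ≤ ε)
    (hG : ∑ j ∈ Gᶜ, ((Uᴴ * (Lm V r * (Lm V r)ᴴ) * U) j j).re ≤ ε ^ 2) :
    ‖((Lm V r * (Lm V r)ᴴ) * D).trace - (Wp U (Lm V r) G G' * D).trace‖ ≤ 2 * ε := by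
  set L := Lm V r with hL
  have hLD : hs (Lᴴ * D) ≤ 1 := by
    rw [← hs_conj, Matrix.conjTranspose_mul, Matrix.conjTranspose_conjTranspose, h0.1.eq]
    exact (hs_contr D L h0 h1).trans (by rw [hs_Lm V hV r hr.1, hr.2])
  have e : L * Lᴴ * D - Wp U L G G' * D
      = (L * ind G'ᶜ) * (Lᴴ * D) + (U * ind Gᶜ * (Uᴴ * L * ind G')) * (Lᴴ * D) := by
    rw [ind_compl, ind_compl, Wp]
    have : (U * (1 - ind G) * (Uᴴ * L * ind G')) = L * ind G' - U * ind G * (Uᴴ * L * ind G') := by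
      rw [Matrix.mul_sub, Matrix.sub_mul, Matrix.mul_one, ← Matrix.mul_assoc U, ← Matrix.mul_assoc U, hU',
        Matrix.one_mul]
    rw [this]
    noncomm_ring
  have hs1 : hs (L * ind G'ᶜ) ≤ ε ^ 2 := by rw [hs_Lm_ind V hV r hr.1]; exact hG'
  have hs2 : hs (U * ind Gᶜ * (Uᴴ * L * ind G')) ≤ ε ^ 2 := by
    rw [Matrix.mul_assoc, hs_unitary_left _ _ hU, ← Matrix.mul_assoc]
    refine (hs_ind_right_le _ _).trans ?_
    rw [hs_ind_left]
    refine le_trans (Finset.sum_le_sum fun j _ => le_of_eq ?_) hG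
    have e : Uᴴ * (L * Lᴴ) * U = (Uᴴ * L) * (Uᴴ * L)ᴴ := by
      rw [Matrix.conjTranspose_mul, Matrix.conjTranspose_conjTranspose]; noncomm_ring
    rw [e, Matrix.mul_apply, Complex.re_sum]
    refine Finset.sum_congr rfl fun b _ => ?_
    rw [← Complex.normSq_eq_norm_sq, Complex.normSq_apply, Matrix.conjTranspose_apply]
    simp
  have fin : ∀ A : Matrix J J ℂ, hs A ≤ ε ^ 2 → ‖(A * (Lᴴ * D)).trace‖ ≤ ε := by
    intro A hA
    refine abs_le_of_sq_le_sq' ?_ hε |>.2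
    calc _ ≤ hs A * hs (Lᴴ * D) := trace_sq_le _ _
      _ ≤ ε ^ 2 * 1 := mul_le_mul hA hLD (hs_nonneg _) (by positivity)
      _ = _ := mul_one _
  rw [← Matrix.trace_sub, e, Matrix.trace_add]
  calc _ ≤ _ := norm_add_le _ _
    _ ≤ ε + ε := add_le_add (fin _ hs1) (fin _ hs2)
    _ = _ := by ring

noncomputable def vv (U L : Matrix J J ℂ) (q : J → ℝ) (G G' : Finset J) (j b : J) : ℂ :=
  ((√(q j))⁻¹ : ℂ) * (ind G * (Uᴴ * L * ind G' * Lᴴ)) j b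

noncomputable def gg (U D : Matrix J J ℂ) (q : J → ℝ) (j b : J) : ℂ :=
  (√(q j) : ℂ) * (D * U) b j

lemma trace_vv (U L D : Matrix J J ℂ) (q : J → ℝ) (G G' : Finset J) (hG : ∀ j ∈ G, 0 < q j) :
    (Wp U L G G' * D).trace = ∑ j, ∑ b, vv U L q G G' j b * gg U D q j b := by
  rw [Wp, Matrix.mul_assoc U, Matrix.mul_assoc U, Matrix.trace_mul_comm, Matrix.mul_assoc]
  simp only [Matrix.trace, Matrix.diag]
  refine Finset.sum_congr rfl fun j _ => ?_
  rw [Matrix.mul_apply]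
  refine Finset.sum_congr rfl fun b _ => ?_
  unfold vv gg
  by_cases h : j ∈ G
  · have : (√(q j) : ℂ) ≠ 0 := by
      exact_mod_cast (Real.sqrt_pos.2 (hG j h)).ne'
    field_simp
  · have : (ind G * (Uᴴ * L * ind G' * Lᴴ)) j b = 0 := by
      unfold ind; rw [Matrix.diagonal_mul]; simp [h]
    rw [this]; simp

lemma gg_bound (U D : Matrix J J ℂ) (q : J → ℝ) (hq : IsProbDist q) (hU : Uᴴ * U = 1)
    (h0 : D.PosSemidef) (h1 : (1 - D).PosSemidef) : ∑ j, ∑ b, ‖gg U D q j b‖ ^ 2 ≤ 1 := by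
  have hcol : ∀ j, ∑ b, ‖U b j‖ ^ 2 = 1 := by
    intro j
    have := congrArg Complex.re (congrFun (congrFun hU j) j)
    rw [Matrix.mul_apply, Complex.re_sum] at this
    simp at this
    rw [← this]
    refine Finset.sum_congr rfl fun b _ => ?_
    rw [← Complex.normSq_eq_norm_sq, Complex.normSq_apply]
  rw [← hq.2]
  refine Finset.sum_le_sum fun j _ => ?_
  unfold gg
  simp only [norm_mul, mul_pow, Complex.norm_real, Real.norm_eq_abs, sq_abs, Real.sq_sqrt (hq.1 j)]
  rw [← Finset.mul_sum]
  have := contr_col D U h0 h1 j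
  rw [hcol] at this
  nlinarith [hq.1 j]

lemma vv_bound (U V : Matrix J J ℂ) (q r : J → ℝ) (hU' : U * Uᴴ = 1) (hV : Vᴴ * V = 1)
    (hr : IsProbDist r) (G G' : Finset J) (β c : ℝ) (hβ : 0 < β) (hc : 0 ≤ c)
    (hG : ∀ j ∈ G, β⁻¹ ≤ q j) (hG' : ∀ j ∈ G', r j ≤ c) :
    ∑ j, ∑ b, ‖vv U (Lm V r) q G G' j b‖ ^ 2 ≤ β * c := by
  have hV' : V * Vᴴ = 1 := mul_eq_one_comm.1 hV
  set L := Lm V r with hL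
  have h1 : ∑ j, ∑ b, ‖vv U L q G G' j b‖ ^ 2 ≤ β * hs (ind G * (Uᴴ * L * ind G' * Lᴴ)) := by
    unfold hs
    rw [Finset.mul_sum]
    refine Finset.sum_le_sum fun j _ => ?_
    rw [Finset.mul_sum]
    refine Finset.sum_le_sum fun b _ => ?_
    unfold vv
    by_cases h : j ∈ G
    · rw [norm_mul, mul_pow]
      gcongr
      have hq : 0 < q j := lt_of_lt_of_le (inv_pos.2 hβ) (hG j h)
      rw [norm_inv, Complex.norm_real, Real.norm_eq_abs, inv_pow, sq_abs, Real.sq_sqrt hq.le]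
      exact inv_le_of_inv_le₀ hβ (hG j h)
    · have : (ind G * (Uᴴ * L * ind G' * Lᴴ)) j b = 0 := by
        unfold ind; rw [Matrix.diagonal_mul]; simp [h]
      rw [this]; simp
  refine h1.trans (mul_le_mul_of_nonneg_left ?_ hβ.le)
  refine (hs_ind_left_le _ _).trans ?_
  have e : Uᴴ * L * ind G' * Lᴴ = Uᴴ * (V * (Matrix.diagonal (fun j => if j ∈ G' then (r j : ℂ) else 0) * Vᴴ)) := by
    have : (Matrix.diagonal (fun j => if j ∈ G' then (r j : ℂ) else 0)) =
      Matrix.diagonal (fun j => (√(r j) : ℂ)) * (ind G' * (Matrix.diagonal (fun j => (√(r j) : ℂ)))ᴴ) := by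
      unfold ind
      rw [Matrix.diagonal_conjTranspose, Matrix.diagonal_mul_diagonal, Matrix.diagonal_mul_diagonal]
      congr 1
      ext j
      by_cases h : j ∈ G'
      · simp only [h, if_true, Pi.star_apply, RCLike.star_def, Complex.conj_ofReal, one_mul]
        rw [← Complex.ofReal_mul, Real.mul_self_sqrt (hr.1 j)]
      · simp [h]
    rw [this, hL, Lm, Matrix.conjTranspose_mul]
    simp only [Matrix.mul_assoc]
  rw [e, hs_unitary_left _ _ (by simpa using hU'), hs_unitary_left _ _ hV,
    hs_unitary_right _ _ (by simpa using hV), hs_diag]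
  calc _ ≤ ∑ j, c * r j := by
        refine Finset.sum_le_sum fun j _ => ?_
        by_cases h : j ∈ G'
        · simp only [h, if_true, Complex.norm_real, Real.norm_eq_abs, sq_abs]
          nlinarith [hr.1 j, hG' j h]
        · simp only [h, if_false]
          simp [mul_nonneg hc (hr.1 j)]
    _ = c := by rw [← Finset.mul_sum, hr.2, mul_one]

end helpers2
section helpers3
open Matrix Finset
set_option linter.unusedSectionVars false

lemma prob_prod {ι : Type*} [Fintype ι] {n : ℕ} (p : Fin n → ι → ℝ) (hp : ∀ k, IsProbDist (p k)) :
    IsProbDist (fun l : Fin n → ι => ∏ k, p k (l k)) := by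
  classical
  refine ⟨fun l => Finset.prod_nonneg fun k _ => (hp k).1 _, ?_⟩
  have := Finset.prod_univ_sum (fun _ : Fin n => (univ : Finset ι)) p
  rw [Fintype.piFinset_univ] at this
  rw [← this]
  exact Finset.prod_eq_one fun k _ => (hp k).2

lemma prob_le_one {ι : Type*} [Fintype ι] (p : ι → ℝ) (hp : IsProbDist p) (i : ι) : p i ≤ 1 := by
  rw [← hp.2]
  exact Finset.single_le_sum (fun i _ => hp.1 i) (Finset.mem_univ i)

noncomputable def K0 (d : ℕ) : ℝ := d * (4 / Real.log 2 ^ 2)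

lemma moment {d : ℕ} (p : Fin d → ℝ) (hp : IsProbDist p) :
    ∑ i, p i * (-Real.logb 2 (p i)) ^ 2 ≤ K0 d := by
  calc _ ≤ ∑ i : Fin d, 4 / Real.log 2 ^ 2 := Finset.sum_le_sum fun i _ => by
        rw [neg_sq]; exact xlogsq _ (hp.1 i) (prob_le_one p hp i)
    _ = _ := by simp [K0]

noncomputable def avg {X : Type*} {d n : ℕ} (W : X → Matrix (Fin d) (Fin d) ℂ) (x : Fin n → X) :
    Matrix (Fin d) (Fin d) ℂ := ∑ k, (((n : ℝ)⁻¹ : ℝ) : ℂ) • W (x k)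

lemma core {X : Type*} {d n : ℕ} (hn : 0 < n) (W : X → Matrix (Fin d) (Fin d) ℂ)
    (hW : ∀ x, IsDensity (W x)) (x : Fin n → X) (U : Matrix (Fin d) (Fin d) ℂ) (q : Fin d → ℝ)
    (hU : Uᴴ * U = 1) (hU' : U * Uᴴ = 1)
    (hs : avg W x = U * Matrix.diagonal (fun i => (q i : ℂ)) * Uᴴ) (hq : IsProbDist q)
    (hH : vnEntropy (avg W x) = - ∑ i, q i * Real.logb 2 (q i))
    (η : ℝ) (hη : 0 < η) (ε : ℝ) (hε : 0 ≤ ε) (hK : n * K0 d / (n * η) ^ 2 ≤ ε ^ 2) :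
    ∃ v : (Fin n → Fin d) → (Fin n → Fin d) → ℂ,
      (∑ j, ∑ b, ‖v j b‖ ^ 2 ≤
        2 ^ (n * vnEntropy (avg W x) - ∑ k, vnEntropy (W (x k)) + 2 * n * η)) ∧
      ∀ D : Matrix (Fin n → Fin d) (Fin n → Fin d) ℂ, D.PosSemidef → (1 - D).PosSemidef →
        ‖(Wblock W n x * D).trace -
          ∑ j, ∑ b, v j b * gg (tens fun _ => U) D (fun j => ∏ k, q (j k)) j b‖ ≤ 2 * ε := by
  have hn' : (0 : ℝ) < n := by exact_mod_cast hn
  choose V0 r0 hV hV' hWs hr hHW using fun y => spec (W y) (hW y)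
  set V := tens (fun k => V0 (x k)) with hVd
  set r : (Fin n → Fin d) → ℝ := fun l => ∏ k, r0 (x k) (l k) with hrd
  set Un := tens (fun _ : Fin n => U) with hUn
  set qn : (Fin n → Fin d) → ℝ := fun j => ∏ k, q (j k) with hqn
  have hrp : IsProbDist r := prob_prod (fun k => r0 (x k)) (fun k => hr _)
  have hVu : Vᴴ * V = 1 := by
    rw [hVd, tens_conj, tens_mul]; simp only [hV]; exact tens_one
  have hUnu : Unᴴ * Un = 1 := by
    rw [hUn, tens_conj, tens_mul]; simp only [hU]; exact tens_one
  have hUnu' : Un * Unᴴ = 1 := by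
    rw [hUn, tens_conj, tens_mul]; simp only [hU']; exact tens_one
  have hWL : Wblock W n x = Lm V r * (Lm V r)ᴴ := by
    rw [Lm_mul V r hrp.1]
    have e : Matrix.diagonal (fun l => (r l : ℂ)) =
        tens (fun k => Matrix.diagonal (fun i => (r0 (x k) i : ℂ))) := by
      rw [tens_diag]; simp [hrd]
    rw [e, hVd, tens_mul, tens_conj, tens_mul]
    simp only [← hWs]
    rfl
  set β : ℝ := 2 ^ (n * vnEntropy (avg W x) + n * η) with hβ
  set c : ℝ := 2 ^ (- ∑ k, vnEntropy (W (x k)) + n * η) with hc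
  have hβ0 : 0 < β := by positivity
  have hc0 : 0 < c := by positivity
  classical
  set G : Finset (Fin n → Fin d) := univ.filter fun j => β⁻¹ ≤ qn j with hG
  set G' : Finset (Fin n → Fin d) := univ.filter fun l => r l ≤ c with hG'
  have hε1 : ∑ j ∈ G'ᶜ, r j ≤ ε ^ 2 := by
    refine le_trans ?_ hK
    refine cheb (fun k => r0 (x k)) (fun k i => - Real.logb 2 (r0 (x k) i)) (fun k => hr _) _ _
      (by positivity) ?_ _ ?_
    · calc _ ≤ ∑ k : Fin n, K0 d := Finset.sum_le_sum fun k _ => moment _ (hr _)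
        _ = _ := by simp
    · intro l hl hne
      simp only [hG', Finset.mem_compl, Finset.mem_filter, Finset.mem_univ, true_and, not_le] at hl
      have hlog := Real.logb_lt_logb (b := 2) (by norm_num) hc0 hl
      rw [hc, Real.logb_rpow (by norm_num) (by norm_num), hrd,
        Real.logb_prod _ _ (fun k hk => (Finset.prod_ne_zero_iff.1 hne) k hk)] at hlog
      have e : ∑ k, ∑ i, r0 (x k) i * -Real.logb 2 (r0 (x k) i) = ∑ k, vnEntropy (W (x k)) := by
        refine Finset.sum_congr rfl fun k _ => ?_
        rw [hHW, ← Finset.sum_neg_distrib]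
        simp
      rw [e, Finset.sum_neg_distrib, abs_sub_comm]
      refine le_trans ?_ (le_abs_self _)
      linarith
  set p : Fin n → Fin d → ℝ := fun k j => ((Uᴴ * W (x k) * U) j j).re with hp
  have hpsd : ∀ k, (Uᴴ * W (x k) * U).PosSemidef := fun k => (hW (x k)).1.conjTranspose_mul_mul_same U
  have hpc : ∀ k j, (p k j : ℂ) = (Uᴴ * W (x k) * U) j j := by
    intro k j
    have := (hpsd k).diag_nonneg (i := j)
    have h2 := (Complex.le_def.1 this).2
    apply Complex.ext
    · simp [hp]
    · simpa using h2
  have hpp : ∀ k, IsProbDist (p k) := by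
    intro k
    constructor
    · intro j
      have := (Complex.le_def.1 ((hpsd k).diag_nonneg (i := j))).1
      simpa using this
    · have e : (Uᴴ * W (x k) * U).trace = 1 := by
        rw [Matrix.trace_mul_comm, ← Matrix.mul_assoc, hU', Matrix.one_mul, (hW _).2]
      have := congrArg Complex.re e
      simpa [Matrix.trace, Complex.re_sum, hp] using this
  have hpq : ∀ j, ∑ k, p k j = n * q j := by
    intro j
    have e : Uᴴ * avg W x * U = Matrix.diagonal (fun i => (q i : ℂ)) := by
      rw [hs]
      calc _ = (Uᴴ * U) * Matrix.diagonal (fun i => (q i : ℂ)) * (Uᴴ * U) := by noncomm_ring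
        _ = _ := by rw [hU]; simp
    have e2 : ∑ k, (((n : ℝ)⁻¹ : ℝ) : ℂ) • (Uᴴ * W (x k) * U) = Matrix.diagonal (fun i => (q i : ℂ)) := by
      rw [← e, avg, Finset.mul_sum, Finset.sum_mul]
      simp
    have e3 := congrArg Complex.re (congrFun (congrFun e2 j) j)
    rw [Matrix.sum_apply, Complex.re_sum] at e3
    simp only [Matrix.smul_apply, smul_eq_mul, Complex.re_ofReal_mul, Matrix.diagonal_apply_eq,
      Complex.ofReal_re] at e3
    rw [← Finset.mul_sum] at e3
    rw [← e3]
    field_simp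
    rfl
  have hmean : ∀ h : Fin d → ℝ, ∑ k, ∑ i, p k i * h i = n * ∑ i, q i * h i := by
    intro h
    rw [Finset.sum_comm, Finset.mul_sum]
    refine Finset.sum_congr rfl fun i _ => ?_
    rw [← Finset.sum_mul, hpq, mul_assoc]
  have hε2 : ∑ j ∈ Gᶜ, ((Unᴴ * (Lm V r * (Lm V r)ᴴ) * Un) j j).re ≤ ε ^ 2 := by
    have e : ∀ j, ((Unᴴ * (Lm V r * (Lm V r)ᴴ) * Un) j j).re = ∏ k, p k (j k) := by
      intro j
      have : Wblock W n x = tens (fun k => W (x k)) := rfl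
      rw [← hWL, this, hUn, tens_conj, tens_mul, tens_mul]
      simp only [tens, Matrix.of_apply, ← hpc]
      rw [← Complex.ofReal_prod, Complex.ofReal_re]
    simp only [e]
    refine le_trans ?_ hK
    refine cheb p (fun k i => - Real.logb 2 (q i)) hpp _ _ (by positivity) ?_ _ ?_
    · rw [hmean (fun i => (- Real.logb 2 (q i)) ^ 2)]
      exact mul_le_mul_of_nonneg_left (moment q hq) hn'.le
    · intro l hl hne
      simp only [hG, Finset.mem_compl, Finset.mem_filter, Finset.mem_univ, true_and, not_le] at hl
      have hqpos : ∀ k, 0 < q (l k) := by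
        intro k
        have h1 : p k (l k) ≠ 0 := (Finset.prod_ne_zero_iff.1 hne) k (Finset.mem_univ _)
        have h2 : 0 < p k (l k) := lt_of_le_of_ne ((hpp k).1 _) h1.symm
        have h3 : p k (l k) ≤ ∑ k', p k' (l k) :=
          Finset.single_le_sum (f := fun k' => p k' (l k)) (fun k' _ => (hpp k').1 _) (Finset.mem_univ k)
        rw [hpq] at h3
        exact pos_of_mul_pos_right (lt_of_lt_of_le h2 h3) hn'.le
      have hlog := Real.logb_lt_logb (b := 2) (by norm_num) (Finset.prod_pos fun k _ => hqpos k) hl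
      rw [Real.logb_inv, hβ, Real.logb_rpow (by norm_num) (by norm_num),
        Real.logb_prod _ _ (fun k hk => (hqpos k).ne')] at hlog
      rw [hmean (fun i => - Real.logb 2 (q i))]
      have e : ∑ i, q i * -Real.logb 2 (q i) = vnEntropy (avg W x) := by
        rw [hH, ← Finset.sum_neg_distrib]
        simp
      rw [e, Finset.sum_neg_distrib]
      refine le_trans ?_ (le_abs_self _)
      linarith
  refine ⟨vv Un (Lm V r) qn G G', ?_, ?_⟩
  · have := vv_bound Un V qn r hUnu' hVu hrp G G' β c hβ0 hc0.le (by simp [hG]) (by simp [hG'])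
    refine this.trans (le_of_eq ?_)
    rw [hβ, hc, ← Real.rpow_add (by norm_num)]
    congr 1
    ring
  · intro D h0 h1
    rw [← trace_vv Un (Lm V r) D qn G G' (by
      intro j hj
      simp only [hG, Finset.mem_filter, Finset.mem_univ, true_and] at hj
      exact lt_of_lt_of_le (inv_pos.2 hβ0) hj), hWL]
    exact lemA Un V D r hUnu hUnu' hVu hrp h0 h1 G G' ε hε1 hε hε2

end helpers3
section helpers4
open Matrix Finset
set_option linter.unusedSectionVars false

lemma mix_density {X : Type*} [Fintype X] {d : ℕ} (W : X → Matrix (Fin d) (Fin d) ℂ)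
    (hW : ∀ x, IsDensity (W x)) (P : X → ℝ) (hP : IsProbDist P) :
    IsDensity (∑ x, (P x : ℂ) • W x) := by
  constructor
  · refine Matrix.posSemidef_sum _ fun x _ => (hW x).1.smul ?_
    exact_mod_cast hP.1 x
  · rw [Matrix.trace_sum]
    simp only [Matrix.trace_smul, (hW _).2, smul_eq_mul, mul_one]
    exact_mod_cast congrArg (fun x : ℝ => (x : ℂ)) hP.2

lemma ent_nonneg {d : ℕ} (ρ : Matrix (Fin d) (Fin d) ℂ) (h : IsDensity ρ) : 0 ≤ vnEntropy ρ := by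
  obtain ⟨U, r, -, -, -, hr, hH⟩ := spec ρ h
  rw [hH, ← Finset.sum_neg_distrib]
  refine Finset.sum_nonneg fun i _ => ?_
  have := Real.logb_nonpos (b := 2) (by norm_num) (hr.1 i) (prob_le_one r hr i)
  nlinarith [hr.1 i]

lemma ent_le {d : ℕ} (ρ : Matrix (Fin d) (Fin d) ℂ) (h : IsDensity ρ) : vnEntropy ρ ≤ 1 + K0 d := by
  obtain ⟨U, r, -, -, -, hr, hH⟩ := spec ρ h
  have := moment r hr
  rw [hH, ← Finset.sum_neg_distrib]
  have h2 : ∑ i, -(r i * Real.logb 2 (r i)) ≤ ∑ i, (r i + r i * (-Real.logb 2 (r i)) ^ 2) := by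
    refine Finset.sum_le_sum fun i _ => ?_
    have : 0 ≤ r i * ((Real.logb 2 (r i) + 1 / 2) ^ 2 + 3 / 4) := mul_nonneg (hr.1 i) (by positivity)
    nlinarith
  rw [Finset.sum_add_distrib, hr.2] at h2
  linarith

lemma cap_bdd {X : Type*} [Fintype X] {d : ℕ} (W : X → Matrix (Fin d) (Fin d) ℂ)
    (hW : ∀ x, IsDensity (W x)) :
    BddAbove {c | ∃ P : X → ℝ, IsProbDist P ∧ c = qMutualInfo P W} := by
  refine ⟨1 + K0 d, ?_⟩
  rintro c ⟨P, hP, rfl⟩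
  unfold qMutualInfo
  have h1 := ent_le _ (mix_density W hW P hP)
  have h2 : 0 ≤ ∑ x, P x * vnEntropy (W x) :=
    Finset.sum_nonneg fun x _ => mul_nonneg (hP.1 x) (ent_nonneg _ (hW x))
  linarith

lemma cap_nonneg {X : Type*} [Fintype X] [Nonempty X] {d : ℕ} (W : X → Matrix (Fin d) (Fin d) ℂ)
    (hW : ∀ x, IsDensity (W x)) : 0 ≤ qCapacity W := by
  classical
  obtain ⟨x0⟩ := ‹Nonempty X›
  refine le_csSup (cap_bdd W hW) ⟨fun x => if x = x0 then 1 else 0, ⟨fun a => by dsimp only; split_ifs <;> simp, by simp⟩, ?_⟩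
  unfold qMutualInfo
  have : ∑ x, (((if x = x0 then 1 else 0 : ℝ)) : ℂ) • W x = W x0 := by
    rw [Finset.sum_eq_single x0]
    · simp
    · intro b _ hb; simp [hb]
    · simp
  rw [this]
  simp

open Classical in
noncomputable def cnt {X : Type*} {n : ℕ} (x : Fin n → X) (y : X) : ℕ :=
  (univ.filter fun k => x k = y).card

lemma sum_cnt {X : Type*} [Fintype X] {n : ℕ} {E : Type*} [AddCommGroup E] [Module ℝ E] (x : Fin n → X)
    (h : X → E) : ∑ k, h (x k) = ∑ y, (cnt x y : ℝ) • h y := by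
  classical
  rw [← Finset.sum_fiberwise univ x]
  refine Finset.sum_congr rfl fun y _ => ?_
  rw [Finset.sum_congr rfl (g := fun _ => h y) (by intro k hk; simp at hk; rw [hk])]
  rw [Finset.sum_const, Nat.cast_smul_eq_nsmul, cnt]

lemma avg_eq {X : Type*} [Fintype X] {d n : ℕ} (W : X → Matrix (Fin d) (Fin d) ℂ) (x : Fin n → X) :
    avg W x = ∑ y, (((n : ℝ)⁻¹ * cnt x y : ℝ) : ℂ) • W y := by
  unfold avg
  rw [sum_cnt x (fun y => (((n : ℝ)⁻¹ : ℝ) : ℂ) • W y)]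
  refine Finset.sum_congr rfl fun y _ => ?_
  ext i j
  simp
  ring

lemma cnt_prob {X : Type*} [Fintype X] {n : ℕ} (hn : 0 < n) (x : Fin n → X) :
    IsProbDist (fun y => (n : ℝ)⁻¹ * cnt x y) := by
  have hn' : (0 : ℝ) < n := by exact_mod_cast hn
  refine ⟨fun y => by positivity, ?_⟩
  have := sum_cnt x (fun _ => (1 : ℝ))
  simp at this
  rw [← Finset.mul_sum, ← this]
  field_simp

lemma avg_cap {X : Type*} [Fintype X] {d n : ℕ} (hn : 0 < n) (W : X → Matrix (Fin d) (Fin d) ℂ)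
    (hW : ∀ x, IsDensity (W x)) (x : Fin n → X) :
    n * vnEntropy (avg W x) - ∑ k, vnEntropy (W (x k)) ≤ n * qCapacity W := by
  have hn' : (0 : ℝ) < n := by exact_mod_cast hn
  have h : qMutualInfo (fun y => (n : ℝ)⁻¹ * cnt x y) W ≤ qCapacity W :=
    le_csSup (cap_bdd W hW) ⟨_, cnt_prob hn x, rfl⟩
  unfold qMutualInfo at h
  rw [← avg_eq] at h
  have e := sum_cnt x (fun y => vnEntropy (W y))
  simp only [smul_eq_mul] at e
  simp only [mul_assoc] at h
  rw [← Finset.mul_sum, ← e] at h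
  have := mul_le_mul_of_nonneg_left h hn'.le
  rw [mul_sub, ← mul_assoc, mul_inv_cancel₀ hn'.ne', one_mul] at this
  exact this

open Classical in
noncomputable def types {X : Type*} [Fintype X] {d : ℕ} (n : ℕ) (W : X → Matrix (Fin d) (Fin d) ℂ) :
    Finset (Matrix (Fin d) (Fin d) ℂ) := univ.image (fun x : Fin n → X => avg W x)

lemma types_card {X : Type*} [Fintype X] {d : ℕ} (n : ℕ) (W : X → Matrix (Fin d) (Fin d) ℂ) :
    (types n W).card ≤ (n + 1) ^ Fintype.card X := by
  classical
  have hsub : types n W ⊆ univ.image (fun c : X → Fin (n + 1) =>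
      ∑ y, (((n : ℝ)⁻¹ * ((c y : ℕ) : ℝ) : ℝ) : ℂ) • W y) := by
    intro σ hσ
    unfold types at hσ
    rw [Finset.mem_image] at hσ ⊢
    obtain ⟨x, -, rfl⟩ := hσ
    refine ⟨fun y => ⟨cnt x y, ?_⟩, Finset.mem_univ _, ?_⟩
    · have : cnt x y ≤ n := by
        unfold cnt
        exact (Finset.card_le_univ _).trans (by simp)
      omega
    · rw [avg_eq]
  refine (Finset.card_le_card hsub).trans (Finset.card_image_le.trans ?_)
  simp

lemma abs_cover {A T I : Type*} [Fintype A] [Fintype T] [DecidableEq T] [Fintype I] (P : A → ℝ)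
    (hP : IsProbDist P) (ty : A → T) (v : A → I → ℂ) (B : ℝ) (hv : ∀ x, ∑ i, ‖v x i‖ ^ 2 ≤ B) (M : ℕ) :
    ∃ s : Fin M → A, ∀ (a : A → ℂ) (g : T → I → ℂ) (ε : ℝ), (∀ t, ∑ i, ‖g t i‖ ^ 2 ≤ 1) →
      (∀ x, ‖a x - ∑ i, v x i * g (ty x) i‖ ≤ 2 * ε) →
      ‖(M : ℂ) * ∑ x, (P x : ℂ) * a x - ∑ k, a (s k)‖ ≤ M * (4 * ε) + √(Fintype.card T * (M * B)) := by
  let w : A → EuclideanSpace ℂ (T × I) := fun x =>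
    WithLp.toLp 2 fun i => if i.1 = ty x then v x i.2 else 0
  have hw : ∀ x, ‖w x‖ ^ 2 ≤ B := by
    intro x
    rw [EuclideanSpace.norm_sq_eq]
    have : ∑ i, ‖(w x) i‖ ^ 2 = ∑ i, ‖v x i‖ ^ 2 := by
      rw [Fintype.sum_prod_type, Finset.sum_eq_single (ty x)]
      · simp [w]
      · intro t _ ht; simp [w, ht]
      · simp
    rw [this]
    exact hv x
  obtain ⟨s, hs'⟩ := greedy P hP w B hw M
  refine ⟨s, fun a g' ε hg' ha => ?_⟩
  let g : T × I → ℂ := fun i => g' i.1 i.2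
  have hg : ∑ i, ‖g i‖ ^ 2 ≤ Fintype.card T := by
    rw [Fintype.sum_prod_type]
    calc _ ≤ ∑ t : T, (1 : ℝ) := Finset.sum_le_sum fun t _ => hg' t
      _ = _ := by simp
  let F : EuclideanSpace ℂ (T × I) →ₗ[ℂ] ℂ :=
    { toFun := fun u => ∑ i, u i * g i
      map_add' := by intro a b; simp [add_mul, Finset.sum_add_distrib]
      map_smul' := by intro a b; simp [Finset.mul_sum, mul_assoc] }
  have hF : ∀ u, ‖F u‖ ^ 2 ≤ ‖u‖ ^ 2 * Fintype.card T := by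
    intro u
    rw [EuclideanSpace.norm_sq_eq]
    refine (norm_sum_mul_sq (fun i => u i) g).trans ?_
    gcongr
  have hFw : ∀ x, ‖a x - F (w x)‖ ≤ 2 * ε := by
    intro x
    have : F (w x) = ∑ i, v x i * g' (ty x) i := by
      change ∑ i, (w x) i * g i = _
      rw [Fintype.sum_prod_type, Finset.sum_eq_single (ty x)]
      · simp [w, g]
      · intro t _ ht; simp [w, ht]
      · simp
    rw [this]
    exact ha x
  set u := ∑ k, w (s k) - (M : ℂ) • ∑ i, (P i : ℂ) • w i with hu
  have hFu : F u = ∑ k, F (w (s k)) - M * ∑ x, (P x : ℂ) * F (w x) := by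
    rw [hu, map_sub, map_sum, map_smul, map_sum]
    simp only [map_smul, smul_eq_mul]
  have hFub : ‖F u‖ ≤ √(Fintype.card T * (M * B)) := by
    apply Real.le_sqrt_of_sq_le
    refine (hF u).trans ?_
    rw [mul_comm]
    gcongr
  have e : (M : ℂ) * ∑ x, (P x : ℂ) * a x - ∑ k, a (s k)
      = M * ∑ x, (P x : ℂ) * (a x - F (w x)) - ∑ k, (a (s k) - F (w (s k))) - F u := by
    rw [hFu]
    simp only [mul_sub, Finset.sum_sub_distrib]
    ring
  rw [e]
  have b1 : ‖(M : ℂ) * ∑ x, (P x : ℂ) * (a x - F (w x))‖ ≤ M * (2 * ε) := by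
    rw [norm_mul, Complex.norm_natCast]
    gcongr
    calc _ ≤ ∑ x, P x * (2 * ε) := by
          refine (norm_sum_le _ _).trans (Finset.sum_le_sum fun x _ => ?_)
          rw [norm_mul, Complex.norm_real, Real.norm_of_nonneg (hP.1 x)]
          exact mul_le_mul_of_nonneg_left (hFw x) (hP.1 x)
      _ = _ := by rw [← Finset.sum_mul, hP.2, one_mul]
  have b2 : ‖∑ k, (a (s k) - F (w (s k)))‖ ≤ M * (2 * ε) := by
    calc _ ≤ ∑ k : Fin M, (2 * ε) :=
          (norm_sum_le _ _).trans (Finset.sum_le_sum fun k _ => hFw _)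
      _ = _ := by simp
  calc _ ≤ _ := norm_sub_le _ _
    _ ≤ _ := add_le_add (norm_sub_le _ _) le_rfl
    _ ≤ _ := by linarith

lemma covering {X : Type*} [Fintype X] {d n : ℕ} (hn : 0 < n)
    (W : X → Matrix (Fin d) (Fin d) ℂ) (hW : ∀ x, IsDensity (W x))
    (P : (Fin n → X) → ℝ) (hP : IsProbDist P)
    (η : ℝ) (hη : 0 < η) (ε : ℝ) (hε : 0 ≤ ε) (hK : n * K0 d / (n * η) ^ 2 ≤ ε ^ 2) (M : ℕ) :
    ∃ s : Fin M → (Fin n → X),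
      ∀ D : Matrix (Fin n → Fin d) (Fin n → Fin d) ℂ, D.PosSemidef → (1 - D).PosSemidef →
        ‖(M : ℂ) * ((∑ x, (P x : ℂ) • Wblock W n x) * D).trace - ∑ k, (Wblock W n (s k) * D).trace‖
          ≤ M * (4 * ε) + √((n + 1) ^ Fintype.card X * (M * 2 ^ (n * (qCapacity W + 2 * η)))) := by
  classical
  have hdens : ∀ t : types n W, IsDensity t.1 := by
    rintro ⟨t, ht⟩
    unfold types at ht
    obtain ⟨x, -, rfl⟩ := Finset.mem_image.1 ht
    simp only [avg_eq]
    exact mix_density W hW _ (cnt_prob hn x)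
  choose U q hU hU' hs hq hH using fun t : types n W => spec t.1 (hdens t)
  obtain ⟨ty, hty⟩ : ∃ ty : (Fin n → X) → types n W, ∀ x, (ty x).1 = avg W x :=
    ⟨fun x => ⟨avg W x, Finset.mem_image_of_mem _ (Finset.mem_univ _)⟩, fun x => rfl⟩
  have hcore := fun x : Fin n → X => core hn W hW x (U (ty x)) (q (ty x)) (hU _) (hU' _)
    ((hty x).symm.trans (hs (ty x))) (hq _) (by rw [← hty x]; exact hH (ty x)) η hη ε hε hK
  choose v hv1 hv2 using hcore
  obtain ⟨s, hs'⟩ := abs_cover P hP ty (fun x (i : (Fin n → Fin d) × (Fin n → Fin d)) => v x i.1 i.2)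
    (2 ^ (n * (qCapacity W + 2 * η))) (by
      intro x
      rw [Fintype.sum_prod_type]
      refine (hv1 x).trans ?_
      apply Real.rpow_le_rpow_of_exponent_le (by norm_num)
      have := avg_cap hn W hW x
      linarith) M
  refine ⟨s, fun D h0 h1 => ?_⟩
  have h := hs' (fun x => (Wblock W n x * D).trace)
    (fun t i => gg (tens fun _ => U t) D (fun j => ∏ k, q t (j k)) i.1 i.2) ε
    (by
      intro t
      rw [Fintype.sum_prod_type]
      refine gg_bound _ D _ (prob_prod (fun _ => q t) (fun _ => hq t)) ?_ h0 h1
      rw [tens_conj, tens_mul]; simp only [hU]; exact tens_one)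
    (by
      intro x
      rw [Fintype.sum_prod_type]
      exact hv2 x D h0 h1)
  have htr : ((∑ x, (P x : ℂ) • Wblock W n x) * D).trace = ∑ x, (P x : ℂ) * (Wblock W n x * D).trace := by
    rw [Finset.sum_mul, Matrix.trace_sum]
    simp
  rw [htr]
  refine h.trans ?_
  have hc : (Fintype.card (types n W) : ℝ) ≤ (n + 1) ^ Fintype.card X := by
    rw [Fintype.card_coe]
    exact_mod_cast types_card n W
  gcongr

end helpers4
section helpers5
open Matrix Finset Filter Topology

lemma trace_block {X : Type*} {d n : ℕ} (W : X → Matrix (Fin d) (Fin d) ℂ)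
    (hW : ∀ x, IsDensity (W x)) (x : Fin n → X) : (Wblock W n x).trace = 1 := by
  have := Finset.prod_univ_sum (fun _ : Fin n => (univ : Finset (Fin d))) (fun k i => W (x k) i i)
  rw [Fintype.piFinset_univ] at this
  simp only [Matrix.trace, Matrix.diag, Wblock, Matrix.of_apply]
  rw [← this]
  exact Finset.prod_eq_one fun k _ => (hW (x k)).2

lemma ev_poly (η : ℝ) (hη : 0 < η) (k : ℕ) (θ : ℝ) (hθ : 0 < θ) :
    ∀ᶠ n : ℕ in atTop, ((n : ℝ) + 1) ^ k * (2 : ℝ) ^ (-(n * η)) < θ := by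
  set r : ℝ := 2 ^ (-η) with hr
  have hr0 : 0 < r := by positivity
  have hr1 : r < 1 := Real.rpow_lt_one_of_one_lt_of_neg (by norm_num) (by linarith)
  have h := tendsto_pow_const_mul_const_pow_of_abs_lt_one k (r := r) (by rwa [abs_of_pos hr0])
  have h2 := h.comp (tendsto_add_atTop_nat 1)
  have h3 := h2.eventually (gt_mem_nhds (show (0 : ℝ) < θ * r by positivity))
  filter_upwards [h3] with n hn
  simp only [Function.comp] at hn
  push_cast at hn
  rw [pow_succ, ← mul_assoc] at hn
  have := lt_of_mul_lt_mul_right hn hr0.le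
  have e : (2 : ℝ) ^ (-(n * η)) = r ^ n := by
    rw [hr, ← Real.rpow_natCast, ← Real.rpow_mul (by norm_num)]
    congr 1; ring
  rw [e]
  exact this

lemma code_bound {X : Type*} [Fintype X] {d : ℕ}
    (W : X → Matrix (Fin d) (Fin d) ℂ) (hW : ∀ x, IsDensity (W x))
    (lam1 lam2 γ : ℝ) (hγ : γ = 1 - lam1 - lam2) (hγ0 : 0 < γ) (η : ℝ) (hη : 0 < η) (n : ℕ) (hn : 0 < n)
    (hK : n * K0 d / (n * η) ^ 2 ≤ (γ / 16) ^ 2) (M : ℕ) (hM0 : 0 < M)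
    (hM : ((n : ℝ) + 1) ^ Fintype.card X * 2 ^ (n * (qCapacity W + 2 * η)) < M * (γ ^ 2 / 16))
    (N : ℕ) (P : Fin N → (Fin n → X) → ℝ) (D : Fin N → Matrix (Fin n → Fin d) (Fin n → Fin d) ℂ)
    (hc : IsQIDCode W n N lam1 lam2 P D) : N ≤ (Fintype.card X ^ n) ^ M := by
  classical
  obtain ⟨hP, hD, hc1, hc2⟩ := hc
  choose s hs using fun i => covering hn W hW (P i) (hP i) η hη (γ / 16) (by positivity) hK M
  have hM0' : (0 : ℝ) < M := by exact_mod_cast hM0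
  have hinj : Function.Injective s := by
    intro i j hij
    by_contra hne
    have a1 := hs i (D i) (hD i).1 (hD i).2
    have a2 := hs j (D i) (hD i).1 (hD i).2
    rw [← hij] at a2
    have c1 := hc1 i
    have c2 := hc2 i j hne
    set a := ((∑ x, (P i x : ℂ) • Wblock W n x) * D i).trace with ha
    set b := ((∑ x, (P j x : ℂ) • Wblock W n x) * D i).trace with hb
    set S := ∑ k, (Wblock W n (s i k) * D i).trace
    set R := √(((n : ℝ) + 1) ^ Fintype.card X * (M * 2 ^ (n * (qCapacity W + 2 * η)))) with hR
    rw [Matrix.mul_sub, Matrix.mul_one, Matrix.trace_sub, ← ha, Complex.sub_re] at c1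
    have t1 : (∑ x, (P i x : ℂ) • Wblock W n x).trace = 1 := by
      rw [Matrix.trace_sum]
      simp only [Matrix.trace_smul, trace_block W hW, smul_eq_mul, mul_one]
      exact_mod_cast congrArg (fun x : ℝ => (x : ℂ)) (hP i).2
    rw [t1, Complex.one_re] at c1
    have r1 := (abs_le.1 ((Complex.abs_re_le_norm _).trans a1)).1
    have r2 := (abs_le.1 ((Complex.abs_re_le_norm _).trans a2)).2
    have r3 := (abs_le.1 ((Complex.abs_re_le_norm _).trans a1)).2
    have m1 : ((M : ℂ) * a).re = M * a.re := by simp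
    have m2 : ((M : ℂ) * b).re = M * b.re := by simp
    rw [Complex.sub_re, m1] at r1 r3
    rw [Complex.sub_re, m2] at r2
    have r2' := (abs_le.1 ((Complex.abs_re_le_norm _).trans a2)).1
    rw [Complex.sub_re, m2] at r2'
    have hR0 : R < M * (γ / 4) := by
      rw [hR, Real.sqrt_lt' (by positivity)]
      calc _ = M * (((n : ℝ) + 1) ^ Fintype.card X * 2 ^ (n * (qCapacity W + 2 * η))) := by ring
        _ < M * (M * (γ ^ 2 / 16)) := by gcongr
        _ = _ := by ring
    have g1 : M * γ ≤ M * (a.re - b.re) := by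
      apply mul_le_mul_of_nonneg_left _ hM0'.le
      linarith
    linarith
  have := Fintype.card_le_of_injective s hinj
  simpa using this

end helpers5

theorem stmt3 {X : Type*} [Fintype X] [Nonempty X] {d : ℕ} (hd : 0 < d)
    (W : X → Matrix (Fin d) (Fin d) ℂ) (hW : ∀ x, IsDensity (W x))
    (lam1 lam2 : ℝ) (h1 : 0 < lam1) (h2 : 0 < lam2) (hsum : lam1 + lam2 < 1)
    (δ : ℝ) (hδ : 0 < δ) :
    ∃ n₀ : ℕ, ∀ n ≥ n₀, ∀ N : ℕ,
      ∀ (P : Fin N → (Fin n → X) → ℝ)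
        (D : Fin N → Matrix (Fin n → Fin d) (Fin n → Fin d) ℂ),
        IsQIDCode W n N lam1 lam2 P D →
        (N:ℝ) ≤ (2:ℝ) ^ ((2:ℝ) ^ ((n:ℝ) * (qCapacity W + δ))) := by
  classical
  obtain ⟨γ, hγ⟩ : ∃ γ, γ = 1 - lam1 - lam2 := ⟨_, rfl⟩
  have hγ0 : 0 < γ := by linarith
  obtain ⟨η, hη⟩ : ∃ η, η = δ / 8 := ⟨_, rfl⟩
  have hη0 : 0 < η := by linarith
  have hC := cap_nonneg W hW
  set C := qCapacity W with hCdef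
  have hX : 1 ≤ Fintype.card X := Fintype.card_pos
  set lX := Real.logb 2 (Fintype.card X) with hlX
  have hlX0 : 0 ≤ lX := Real.logb_nonneg (by norm_num) (by exact_mod_cast hX)
  have ev1 := ev_poly (2 * η) (by linarith) (Fintype.card X) (γ ^ 2 / 16) (by positivity)
  have ev2 := ev_poly (4 * η) (by linarith) 1 (1 / (2 * (lX + 1))) (by positivity)
  have ev3 : ∀ᶠ n : ℕ in Filter.atTop, (K0 d / η ^ 2) / (n : ℝ) < (γ / 16) ^ 2 :=
    (tendsto_const_div_atTop_nhds_zero_nat (K0 d / η ^ 2)).eventually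
      (gt_mem_nhds (show (0 : ℝ) < (γ / 16) ^ 2 by positivity))
  obtain ⟨n₀, hn₀⟩ := Filter.eventually_atTop.1 (ev1.and (ev2.and (ev3.and (Filter.eventually_gt_atTop 0))))
  refine ⟨n₀, fun n hn N P D hcode => ?_⟩
  obtain ⟨e1, e2, e3, hnpos⟩ := hn₀ n hn
  have hn' : (0 : ℝ) < n := by exact_mod_cast hnpos
  obtain ⟨M, hM⟩ : ∃ M : ℕ, M = ⌈(2 : ℝ) ^ (n * (C + 4 * η))⌉₊ := ⟨_, rfl⟩
  have hMl : (2 : ℝ) ^ (n * (C + 4 * η)) ≤ M := by rw [hM]; exact Nat.le_ceil _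
  have hone : (1 : ℝ) ≤ 2 ^ (n * (C + 4 * η)) := Real.one_le_rpow (by norm_num) (by positivity)
  have hMu : (M : ℝ) ≤ 2 * 2 ^ (n * (C + 4 * η)) := by
    have : (M : ℝ) < 2 ^ (n * (C + 4 * η)) + 1 := by rw [hM]; exact Nat.ceil_lt_add_one (by positivity)
    linarith
  have hM0 : 0 < M := by
    have : (0 : ℝ) < M := by linarith
    exact_mod_cast this
  have hb := code_bound W hW lam1 lam2 γ hγ hγ0 η hη0 n hnpos (by
    refine le_trans (le_of_eq ?_) e3.le
    field_simp) M hM0 (by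
    calc ((n : ℝ) + 1) ^ Fintype.card X * 2 ^ (n * (C + 2 * η))
        = (((n : ℝ) + 1) ^ Fintype.card X * 2 ^ (-(n * (2 * η)))) * 2 ^ (n * (C + 4 * η)) := by
          rw [mul_assoc, ← Real.rpow_add (by norm_num)]
          congr 2; ring
      _ < (γ ^ 2 / 16) * 2 ^ (n * (C + 4 * η)) := by gcongr
      _ ≤ (γ ^ 2 / 16) * M := by gcongr
      _ = _ := mul_comm _ _) N P D hcode
  have hb' : (N : ℝ) ≤ ((Fintype.card X : ℝ) ^ n) ^ M := by exact_mod_cast hb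
  refine hb'.trans ?_
  have hXe : (Fintype.card X : ℝ) = 2 ^ lX := by
    rw [hlX, Real.rpow_logb (by norm_num) (by norm_num)]
    exact_mod_cast hX
  rw [hXe, ← pow_mul, ← Real.rpow_natCast, ← Real.rpow_mul (by norm_num)]
  apply Real.rpow_le_rpow_of_exponent_le (by norm_num)
  push_cast
  have k1 : (n : ℝ) * (2 * (lX + 1)) ≤ 2 ^ (n * (4 * η)) := by
    rw [pow_one, Real.rpow_neg (by norm_num), ← div_eq_mul_inv, div_lt_div_iff₀ (by positivity) (by positivity)] at e2
    nlinarith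
  calc lX * (n * M) ≤ (lX + 1) * (n * (2 * 2 ^ (n * (C + 4 * η)))) := by
        gcongr
        linarith
    _ = (n * (2 * (lX + 1))) * 2 ^ (n * (C + 4 * η)) := by ring
    _ ≤ 2 ^ (n * (4 * η)) * 2 ^ (n * (C + 4 * η)) := by gcongr
    _ = 2 ^ (n * (C + δ)) := by
        rw [← Real.rpow_add (by norm_num)]
        congr 1
        rw [hη]; ring
end

section
/- Let (𝒱, ℰ) be a quantum hypergraph such that E ≤ η𝟙 for all E ∈ ℰ. For a probability distribution P on ℰ define ρ = ∑_{E∈ℰ} P(E)·E, and fix ε, τ > 0. Then there exist a subspace 𝒱₀ of 𝒱 and E₁, …, E_L ∈ ℰ such that, writing Π₀ and Π₁ for the orthogonal projections onto 𝒱₀ and its orthogonal complement, and ρ̄ = (1/L)∑_{i=1}^{L} E_i, the following hold: Tr(ρΠ₀) ≤ τ; (1−ε)·Π₁ρΠ₁ ≤ Π₁ρ̄Π₁ ≤ (1+ε)·Π₁ρΠ₁; and L ≤ 1 + η·(dim 𝒱)·(2 ln 2 · log(2 dim 𝒱))/(ε²τ). -/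
open scoped BigOperators
open ComplexOrder
open scoped Matrix

theorem aux_spec {n : Type*} [Fintype n] [DecidableEq n] (M : Matrix n n ℂ) (hM : M.IsHermitian) :
    ∃ Q G : Matrix n n ℂ, Q.IsHermitian ∧ Q * Q = Q ∧ Q = M * G ∧ 0 ≤ (M * Q).trace.re ∧
      (-((1 - Q) * M * (1 - Q))).PosSemidef := by
  classical
  obtain ⟨V, lam, hV1, hV2, hMe⟩ : ∃ (V : Matrix n n ℂ) (lam : n → ℝ), V * Vᴴ = 1 ∧ Vᴴ * V = 1 ∧
      M = V * Matrix.diagonal (fun i => (lam i : ℂ)) * Vᴴ := by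
    refine ⟨hM.eigenvectorUnitary, hM.eigenvalues, ?_, ?_, ?_⟩
    · exact Unitary.coe_mul_star_self hM.eigenvectorUnitary
    · exact Unitary.coe_star_mul_self hM.eigenvectorUnitary
    · exact hM.spectral_theorem
  have key : ∀ f g : n → ℂ, (V * Matrix.diagonal f * Vᴴ) * (V * Matrix.diagonal g * Vᴴ)
      = V * Matrix.diagonal (fun i => f i * g i) * Vᴴ := by
    intro f g
    calc _ = V * Matrix.diagonal f * (Vᴴ * V) * Matrix.diagonal g * Vᴴ := by
          simp only [Matrix.mul_assoc]
      _ = _ := by rw [hV2, Matrix.mul_one, Matrix.mul_assoc V, Matrix.diagonal_mul_diagonal]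
  set p : n → ℂ := fun i => if 0 < lam i then 1 else 0 with hp
  have h1 : 1 - V * Matrix.diagonal p * Vᴴ = V * Matrix.diagonal (fun i => 1 - p i) * Vᴴ := by
    have : Matrix.diagonal (fun i => 1 - p i) = 1 - Matrix.diagonal p := by
      rw [← Matrix.diagonal_one, Matrix.diagonal_sub]
    rw [this, Matrix.mul_sub, Matrix.sub_mul, Matrix.mul_one, hV1]
  refine ⟨V * Matrix.diagonal p * Vᴴ,
    V * Matrix.diagonal (fun i => if 0 < lam i then (lam i : ℂ)⁻¹ else 0) * Vᴴ, ?_, ?_, ?_, ?_, ?_⟩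
  · apply Matrix.isHermitian_mul_mul_conjTranspose
    rw [Matrix.isHermitian_diagonal_iff]
    intro i
    simp only [hp]
    split_ifs <;> simp [IsSelfAdjoint]
  · rw [key]
    congr 3
    ext i
    simp only [hp]
    split_ifs <;> simp
  · rw [hMe, key]
    congr 3
    ext i
    simp only [hp]
    split_ifs with h
    · rw [mul_inv_cancel₀]
      exact_mod_cast h.ne'
    · simp
  · rw [hMe, key, Matrix.trace_mul_comm, ← Matrix.mul_assoc, hV2, Matrix.one_mul,
      Matrix.trace_diagonal, Complex.re_sum]
    apply Finset.sum_nonneg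
    intro i _
    simp only [hp]
    split_ifs with h
    · simpa using h.le
    · simp
  · rw [h1, hMe, key, key]
    have : -(V * Matrix.diagonal (fun i => (1 - p i) * (lam i : ℂ) * (1 - p i)) * Vᴴ)
      = V * Matrix.diagonal (fun i => -((1 - p i) * (lam i : ℂ) * (1 - p i))) * Vᴴ := by
      rw [← Matrix.neg_mul, ← Matrix.mul_neg, Matrix.diagonal_neg]
    rw [this]
    apply Matrix.PosSemidef.mul_mul_conjTranspose_same
    rw [Matrix.posSemidef_diagonal_iff]
    intro i
    simp only [hp]
    split_ifs with h
    · simp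
    · simp only [sub_zero, one_mul, mul_one]
      rw [← Complex.ofReal_neg]
      exact_mod_cast (by linarith : (0:ℝ) ≤ - lam i)

theorem aux_proj {n : Type*} [Fintype n] [DecidableEq n] (H Q : Matrix n n ℂ) (hH : H.IsHermitian)
    (hQ : Q.IsHermitian) (hQQ : Q * Q = Q) :
    ∃ R : Matrix n n ℂ, R.IsHermitian ∧ R * R = R ∧ Q * R = R ∧ R * Q = R ∧
      0 ≤ (H * R).trace.re ∧ (-((Q - R) * H * (Q - R))).PosSemidef := by
  have hM : (Q * H * Q).IsHermitian := by
    have := Matrix.isHermitian_mul_mul_conjTranspose Q hH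
    rwa [hQ.eq] at this
  obtain ⟨R, G, hR, hRR, hG, htr, hps⟩ := aux_spec _ hM
  have hQR : Q * R = R := by
    rw [hG]; simp only [← Matrix.mul_assoc]; rw [hQQ]
  have hRQ : R * Q = R := by
    have := congrArg Matrix.conjTranspose hQR
    rwa [Matrix.conjTranspose_mul, hQ.eq, hR.eq] at this
  refine ⟨R, hR, hRR, hQR, hRQ, ?_, ?_⟩
  · have : (Q * H * Q * R).trace = (H * R).trace := by
      rw [Matrix.mul_assoc, hQR, Matrix.mul_assoc, Matrix.trace_mul_comm, Matrix.mul_assoc, hRQ]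
    rwa [this] at htr
  · have : (1 - R) * (Q * H * Q) * (1 - R) = (Q - R) * H * (Q - R) := by
      calc _ = ((1 - R) * Q) * H * (Q * (1 - R)) := by simp only [Matrix.mul_assoc]
        _ = _ := by rw [Matrix.sub_mul, Matrix.mul_sub, hQR, hRQ, Matrix.one_mul, Matrix.mul_one]
    rwa [this] at hps

theorem aux_sqrt {n : Type*} [Fintype n] [DecidableEq n] (A : Matrix n n ℂ) (hA : A.PosSemidef) :
    ∃ C : Matrix n n ℂ, A = Cᴴ * C := by
  open scoped MatrixOrder in
  exact CStarAlgebra.nonneg_iff_eq_star_mul_self.mp hA.nonneg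

theorem aux_tr {n : Type*} [Fintype n] [DecidableEq n] (A B : Matrix n n ℂ) (hA : A.PosSemidef)
    (hB : B.PosSemidef) : 0 ≤ (A * B).trace.re := by
  obtain ⟨C, rfl⟩ := aux_sqrt A hA
  rw [Matrix.mul_assoc, Matrix.trace_mul_comm]
  exact (Complex.le_def.mp (hB.mul_mul_conjTranspose_same C).trace_nonneg).1

theorem aux_wavg {ι : Type*} [Fintype ι] (P : ι → ℝ) (hP : IsProbDist P) (f : ι → ℝ) (c : ℝ)
    (h : ∑ i, P i * f i ≤ c) : ∃ i, f i ≤ c := by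
  by_contra! hc
  have h1 : ∑ i, P i * (f i - c) ≤ 0 := by
    simp only [mul_sub, Finset.sum_sub_distrib, ← Finset.sum_mul, hP.2]
    linarith
  have h0 : ∀ i ∈ Finset.univ, 0 ≤ P i * (f i - c) := fun i _ =>
    mul_nonneg (hP.1 i) (by linarith [hc i])
  have h2 := (Finset.sum_eq_zero_iff_of_nonneg h0).mp (le_antisymm h1 (Finset.sum_nonneg h0))
  have h3 : ∀ i, P i = 0 := by
    intro i
    rcases mul_eq_zero.mp (h2 i (Finset.mem_univ i)) with h | h
    · exact h
    · linarith [hc i]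
  have := hP.2
  simp [h3] at this

theorem aux_greedy {n ι : Type*} [Fintype n] [DecidableEq n] [Fintype ι] (P : ι → ℝ)
    (hP : IsProbDist P) (X : ι → Matrix n n ℂ) (hX : ∑ i, (P i : ℂ) • X i = 0)
    (S : Matrix n n ℂ) (V : ℝ) (hV : ∑ i, P i * (X i * S * X i).trace.re ≤ V) (L : ℕ) :
    ∃ sel : Fin L → ι,
      ((∑ k, X (sel k)) * S * (∑ k, X (sel k))).trace.re ≤ L * V := by
  induction L with
  | zero => exact ⟨Fin.elim0, by simp⟩
  | succ L ih =>
    obtain ⟨sel, hs⟩ := ih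
    set Y := ∑ k, X (sel k) with hY
    have e1 : ∑ i, P i * (X i * S * Y).trace.re = 0 := by
      have : ((∑ i, (P i : ℂ) • X i) * S * Y).trace.re = 0 := by rw [hX]; simp
      rw [← this]
      simp [Matrix.sum_mul, Matrix.trace_sum]
    have e2 : ∑ i, P i * (Y * S * X i).trace.re = 0 := by
      have : (Y * S * (∑ i, (P i : ℂ) • X i)).trace.re = 0 := by rw [hX]; simp
      rw [← this]
      simp [Matrix.mul_sum, Matrix.trace_sum]
    have e3 : ∀ i, ((X i + Y) * S * (X i + Y)).trace.re = (X i * S * X i).trace.re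
        + (X i * S * Y).trace.re + (Y * S * X i).trace.re + (Y * S * Y).trace.re := by
      intro i
      simp only [Matrix.add_mul, Matrix.mul_add, Matrix.trace_add, Complex.add_re]
      ring
    obtain ⟨i, hi⟩ := aux_wavg P hP (fun i => ((X i + Y) * S * (X i + Y)).trace.re)
      (L * V + V) (by
        rw [Finset.sum_congr rfl (fun i _ => congrArg (P i * ·) (e3 i))]
        simp only [mul_add, Finset.sum_add_distrib, e1, e2, ← Finset.sum_mul, hP.2]
        linarith)
    refine ⟨Fin.cons i sel, ?_⟩
    simp only [Fin.sum_univ_succ, Fin.cons_zero, Fin.cons_succ]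
    rw [← hY]
    push_cast
    linarith

theorem aux_sq {n : Type*} [Fintype n] [DecidableEq n] (E : Matrix n n ℂ) (η : ℝ)
    (hη : 0 ≤ η) (h1 : E.PosSemidef) (h2 : ((η:ℂ) • 1 - E).PosSemidef) :
    ((η:ℂ) • E - E * E).PosSemidef := by
  rcases hη.eq_or_lt with h | h
  · subst h
    have : E = 0 := by
      open scoped MatrixOrder in
      apply le_antisymm
      · rw [Matrix.le_iff]; simpa using h2
      · exact h1.nonneg
    subst this
    simpa using Matrix.PosSemidef.zero
  · have a := h2.mul_mul_conjTranspose_same E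
    have b := h1.mul_mul_conjTranspose_same ((η:ℂ) • 1 - E)
    rw [h1.isHermitian.eq] at a
    rw [h2.isHermitian.eq] at b
    have c := (a.add b).smul (a := ((η⁻¹ : ℝ) : ℂ)) (by exact_mod_cast (inv_pos.mpr h).le)
    convert c using 1
    have : (η : ℂ) ≠ 0 := by exact_mod_cast h.ne'
    simp only [Matrix.mul_sub, Matrix.sub_mul, Matrix.smul_mul, Matrix.mul_smul, Matrix.one_mul,
      Matrix.mul_one, smul_sub, smul_add, smul_smul]
    push_cast
    rw [inv_mul_cancel_left₀ this, inv_mul_cancel₀ this]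
    simp only [Matrix.mul_assoc, one_smul]
    abel

theorem stmt8 {d : ℕ} (hd : 0 < d) {ι : Type*} [Fintype ι] [Nonempty ι]
    (Ed : ι → Matrix (Fin d) (Fin d) ℂ) (η : ℝ)
    (hE : ∀ i, (Ed i).PosSemidef ∧ (1 - Ed i).PosSemidef ∧ ((η:ℂ) • 1 - Ed i).PosSemidef)
    (P : ι → ℝ) (hP : IsProbDist P)
    (ρ : Matrix (Fin d) (Fin d) ℂ) (hρ : ρ = ∑ i, (P i : ℂ) • Ed i)
    (ε τ : ℝ) (hε : 0 < ε) (hτ : 0 < τ) :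
    ∃ (Proj0 : Matrix (Fin d) (Fin d) ℂ) (L : ℕ) (sel : Fin L → ι),
      Proj0.IsHermitian ∧ Proj0 * Proj0 = Proj0 ∧ 0 < L ∧
      (ρ * Proj0).trace.re ≤ τ ∧
      ((1 - Proj0) * ((L:ℂ)⁻¹ • ∑ i, Ed (sel i)) * (1 - Proj0)
          - ((1 - ε : ℝ) : ℂ) • ((1 - Proj0) * ρ * (1 - Proj0))).PosSemidef ∧
      (((1 + ε : ℝ) : ℂ) • ((1 - Proj0) * ρ * (1 - Proj0))
          - (1 - Proj0) * ((L:ℂ)⁻¹ • ∑ i, Ed (sel i)) * (1 - Proj0)).PosSemidef ∧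
      (L:ℝ) ≤ 1 + η * d * (2 * Real.log 2 * Real.logb 2 (2 * d)) / (ε^2 * τ) := by
  have hη : 0 ≤ η := by
    obtain ⟨i⟩ := ‹Nonempty ι›
    have h := ((hE i).1.add (hE i).2.2).trace_nonneg
    rw [add_sub_cancel, Matrix.trace_smul, Matrix.trace_one, Fintype.card_fin] at h
    have h' : (0:ℝ) ≤ η * d := by
      have := (Complex.le_def.mp h).1
      simpa using this
    have hd' : (0:ℝ) < d := by exact_mod_cast hd
    exact nonneg_of_mul_nonneg_left h' hd'
  have hd' : (0:ℝ) < d := by exact_mod_cast hd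
  have hρP : ρ.PosSemidef := by
    rw [hρ]
    apply Matrix.posSemidef_sum
    intro i _
    exact (hE i).1.smul (by exact_mod_cast hP.1 i)
  set K : ℝ := η * d / (ε^2 * τ) with hK
  have hετ : 0 < ε^2 * τ := by positivity
  have hK0 : 0 ≤ K := by positivity
  set L : ℕ := ⌊K⌋₊ + 1 with hL
  have hLK : K < L := by rw [hL]; push_cast; exact Nat.lt_floor_add_one K
  have hLK2 : (L:ℝ) ≤ 1 + K := by
    rw [hL]; push_cast; linarith [Nat.floor_le hK0]
  have hL0 : (0:ℝ) < L := lt_of_le_of_lt hK0 hLK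
  have hLτ : η * d / L < ε^2 * τ := by
    rw [div_lt_iff₀ hL0]
    rw [hK, div_lt_iff₀ hετ] at hLK
    linarith
  obtain ⟨δ, hδ, hδe⟩ : ∃ δ : ℝ, 0 < δ ∧ η * d / L + ε^2 * (δ * d) = ε^2 * τ := by
    refine ⟨(ε^2 * τ - η * d / L) / (ε^2 * d), ?_, ?_⟩
    · apply div_pos (by linarith) (by positivity)
    · field_simp
      ring
  set σ : Matrix (Fin d) (Fin d) ℂ := ρ + (δ : ℂ) • 1 with hσ
  have hσP : σ.PosDef := by
    apply Matrix.PosDef.posSemidef_add hρP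
    exact Matrix.PosDef.one.smul (by exact_mod_cast hδ)
  set S := σ⁻¹ with hS
  have hSP : S.PosSemidef := hσP.inv.posSemidef
  have hdet : IsUnit σ.det := (Matrix.isUnit_iff_isUnit_det σ).mp hσP.isUnit
  have hσS : σ * S = 1 := Matrix.mul_nonsing_inv _ hdet
  have hSσ : S * σ = 1 := Matrix.nonsing_inv_mul _ hdet
  have hX : ∑ i, (P i : ℂ) • (Ed i - ρ) = 0 := by
    simp only [smul_sub, Finset.sum_sub_distrib, ← Finset.sum_smul, ← hρ]
    rw [← Complex.ofReal_sum, hP.2]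
    simp
  have hρS : (ρ * S).trace.re ≤ d := by
    have h1 : ρ * S = 1 - (δ:ℂ) • S := by
      rw [← hσS, hσ, Matrix.add_mul, Matrix.smul_mul, Matrix.one_mul, add_sub_cancel_right]
    have h2 : 0 ≤ S.trace.re := (Complex.le_def.mp hSP.trace_nonneg).1
    rw [h1, Matrix.trace_sub, Matrix.trace_one, Matrix.trace_smul]
    simp
    positivity
  have hV : ∑ i, P i * ((Ed i - ρ) * S * (Ed i - ρ)).trace.re ≤ η * d := by
    have e1 : ∑ i, P i * (Ed i * S * ρ).trace.re = (ρ * S * ρ).trace.re := by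
      conv_rhs => rw [Matrix.mul_assoc]; enter [1,1,1]; rw [hρ]
      simp [Matrix.sum_mul, Matrix.trace_sum, Matrix.mul_assoc]
    have e2 : ∑ i, P i * (ρ * S * Ed i).trace.re = (ρ * S * ρ).trace.re := by
      conv_rhs => enter [1,1,2]; rw [hρ]
      simp [Matrix.mul_sum, Matrix.trace_sum]
    have e4 : ∑ i, P i * (Ed i * S).trace.re = (ρ * S).trace.re := by
      rw [hρ]
      simp [Matrix.sum_mul, Matrix.trace_sum]
    have e5 : 0 ≤ (ρ * S * ρ).trace.re := by
      have := hSP.mul_mul_conjTranspose_same ρ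
      rw [hρP.isHermitian.eq] at this
      exact (Complex.le_def.mp this.trace_nonneg).1
    have e6 : ∀ i, (Ed i * S * Ed i).trace.re ≤ η * (Ed i * S).trace.re := by
      intro i
      have := aux_tr _ _ (aux_sq (Ed i) η hη (hE i).1 (hE i).2.2) hSP
      rw [Matrix.sub_mul, Matrix.trace_sub, Matrix.smul_mul, Matrix.trace_smul] at this
      rw [Matrix.trace_mul_comm, ← Matrix.mul_assoc]
      simp at this
      linarith
    have e3 : ∀ i, ((Ed i - ρ) * S * (Ed i - ρ)).trace.re = (Ed i * S * Ed i).trace.re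
        - (Ed i * S * ρ).trace.re - (ρ * S * Ed i).trace.re + (ρ * S * ρ).trace.re := by
      intro i
      simp only [Matrix.sub_mul, Matrix.mul_sub, Matrix.trace_sub, Complex.sub_re]
      ring
    have e7 : ∑ i, P i * (Ed i * S * Ed i).trace.re ≤ η * (ρ * S).trace.re := by
      rw [← e4, Finset.mul_sum]
      apply Finset.sum_le_sum
      intro i _
      have := mul_le_mul_of_nonneg_left (e6 i) (hP.1 i)
      linarith
    have e8 := mul_le_mul_of_nonneg_left hρS hη
    rw [Finset.sum_congr rfl (fun i _ => congrArg (P i * ·) (e3 i))]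
    simp only [mul_add, mul_sub, Finset.sum_add_distrib, Finset.sum_sub_distrib, e1, e2,
      ← Finset.sum_mul, hP.2]
    linarith
  obtain ⟨sel, hsel⟩ := aux_greedy P hP (fun i => Ed i - ρ) hX S (η * d) hV L
  have hLc : (L:ℂ) ≠ 0 := by exact_mod_cast hL0.ne'
  obtain ⟨Y, hY⟩ : ∃ Y, Y = ∑ k, (Ed (sel k) - ρ) := ⟨_, rfl⟩
  rw [← hY] at hsel
  obtain ⟨D, hD⟩ : ∃ D, D = (L:ℂ)⁻¹ • Y := ⟨_, rfl⟩
  have hbar : (L:ℂ)⁻¹ • ∑ i, Ed (sel i) = ρ + D := by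
    have : ∑ i, Ed (sel i) = Y + (L:ℂ) • ρ := by
      rw [hY, Finset.sum_sub_distrib]
      simp [Nat.cast_smul_eq_nsmul]
    rw [this, smul_add, smul_smul, inv_mul_cancel₀ hLc, one_smul, hD, add_comm]
  have hDq : (D * S * D).trace.re ≤ η * d / L := by
    have : (D * S * D).trace.re = (L:ℝ)⁻¹ * ((L:ℝ)⁻¹ * (Y * S * Y).trace.re) := by
      rw [hD]
      simp only [Matrix.smul_mul, Matrix.mul_smul, Matrix.trace_smul, smul_eq_mul]
      rw [← Complex.ofReal_natCast, ← Complex.ofReal_inv, Complex.re_ofReal_mul,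
        Complex.re_ofReal_mul]
    rw [this]
    calc _ ≤ (L:ℝ)⁻¹ * ((L:ℝ)⁻¹ * (L * (η * d))) := by gcongr
      _ = _ := by field_simp
  have hDH : D.IsHermitian := by
    have h1 : Y.IsHermitian := by
      rw [hY]
      unfold Matrix.IsHermitian
      rw [Matrix.conjTranspose_sum]
      apply Finset.sum_congr rfl
      intro k _
      exact ((hE (sel k)).1.isHermitian.sub hρP.isHermitian).eq
    rw [hD]
    unfold Matrix.IsHermitian
    rw [Matrix.conjTranspose_smul, h1.eq]
    simp
  have hερ : ((ε:ℂ) • ρ).IsHermitian := by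
    unfold Matrix.IsHermitian
    rw [Matrix.conjTranspose_smul, hρP.isHermitian.eq]
    simp
  obtain ⟨A, hA, hAA, -, -, hAt, hAp⟩ := aux_proj (D - (ε:ℂ) • ρ) 1 (hDH.sub hερ)
    Matrix.isHermitian_one (by simp)
  have hQ : (1 - A).IsHermitian := Matrix.isHermitian_one.sub hA
  have hQQ : (1 - A) * (1 - A) = 1 - A := by
    simp only [Matrix.sub_mul, Matrix.mul_sub, hAA]; simp
  obtain ⟨B, hB, hBB, hQB, hBQ, hBt, hBp⟩ := aux_proj (-D - (ε:ℂ) • ρ) (1 - A)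
    (hDH.neg.sub hερ) hQ hQQ
  have hAB : A * B = 0 := by
    rw [Matrix.sub_mul, Matrix.one_mul] at hQB
    simpa using hQB
  have hBA : B * A = 0 := by
    rw [Matrix.mul_sub, Matrix.mul_one] at hBQ
    simpa using hBQ
  have hU : (A - B) * (A - B) = A + B := by
    rw [Matrix.sub_mul, Matrix.mul_sub, Matrix.mul_sub, hAA, hBB, hAB, hBA]; simp
  have hPi : (A + B) * (A + B) = A + B := by
    rw [Matrix.add_mul, Matrix.mul_add, Matrix.mul_add, hAA, hBB, hAB, hBA]; simp
  have hPiH : (A + B).IsHermitian := hA.add hB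
  have hR : 1 - A - B = 1 - (A + B) := by abel
  have hRH : (1 - (A + B)).IsHermitian := Matrix.isHermitian_one.sub hPiH
  rw [hR] at hBp
  have hAp' : (-((1 - (A + B)) * (D - (ε:ℂ) • ρ) * (1 - (A + B)))).PosSemidef := by
    have := hAp.mul_mul_conjTranspose_same (1 - (A + B))
    rw [hRH.eq] at this
    have h1 : (1 - (A + B)) * (1 - A) = 1 - (A + B) := by
      simp only [Matrix.sub_mul, Matrix.mul_sub, Matrix.add_mul, hAA, hBA]; simp
    have h2 : (1 - A) * (1 - (A + B)) = 1 - (A + B) := by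
      simp only [Matrix.sub_mul, Matrix.mul_sub, Matrix.mul_add, hAA, hAB]; simp; abel
    convert this using 1
    rw [Matrix.mul_neg, Matrix.neg_mul]
    congr 1
    calc _ = ((1 - (A + B)) * (1 - A)) * (D - (ε:ℂ) • ρ) * ((1 - A) * (1 - (A + B))) := by
          rw [h1, h2]
      _ = _ := by simp only [Matrix.mul_assoc]
  refine ⟨A + B, L, sel, hPiH, hPi, by rw [hL]; omega, ?_, ?_, ?_, ?_⟩
  · -- trace bound
    have hUH : (A - B).IsHermitian := hA.sub hB
    have q1 := (Complex.le_def.mp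
      (hSP.conjTranspose_mul_mul_same (D - (ε:ℂ) • (σ * (A - B)))).trace_nonneg).1
    have q2 : (D - (ε:ℂ) • (σ * (A - B)))ᴴ * S * (D - (ε:ℂ) • (σ * (A - B)))
        = D * S * D - (ε:ℂ) • (D * (A - B)) - (ε:ℂ) • ((A - B) * D)
          + (ε:ℂ) • ((ε:ℂ) • ((A - B) * (σ * (A - B)))) := by
      rw [Matrix.conjTranspose_sub, Matrix.conjTranspose_smul, Matrix.conjTranspose_mul,
        hDH.eq, hUH.eq, hσP.isHermitian.eq]
      have g1 : (A - B) * σ * S = A - B := by rw [Matrix.mul_assoc, hσS, Matrix.mul_one]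
      have g2 : D * S * (σ * (A - B)) = D * (A - B) := by
        rw [Matrix.mul_assoc, ← Matrix.mul_assoc S, hSσ, Matrix.one_mul]
      have g3 : star (ε:ℂ) = ε := by simp
      generalize hZ : σ * (A - B) = Z at g2 ⊢
      rw [g3, Matrix.sub_mul, Matrix.smul_mul, g1, Matrix.sub_mul, Matrix.mul_sub, Matrix.mul_sub,
        Matrix.mul_smul, g2, Matrix.smul_mul, Matrix.smul_mul, Matrix.mul_smul]
      abel
    have q3 : ((A - B) * (σ * (A - B))).trace.re
        = (ρ * (A + B)).trace.re + δ * (A + B).trace.re := by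
      rw [Matrix.trace_mul_comm, Matrix.mul_assoc, hU, hσ, Matrix.add_mul, Matrix.trace_add,
        Matrix.smul_mul, Matrix.one_mul, Matrix.trace_smul]
      simp
    have q4 : (A + B).trace.re ≤ d := by
      have h := (Matrix.posSemidef_conjTranspose_mul_self (1 - (A + B))).trace_nonneg
      rw [hRH.eq, Matrix.sub_mul, Matrix.mul_sub (A + B), hPi] at h
      have := (Complex.le_def.mp h).1
      simp at this
      simp
      linarith
    rw [q2, Matrix.trace_add, Matrix.trace_sub, Matrix.trace_sub, Matrix.trace_smul,
      Matrix.trace_smul, Matrix.trace_smul, Matrix.trace_smul, Matrix.trace_mul_comm (A - B) D]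
      at q1
    simp only [smul_eq_mul, Complex.add_re, Complex.sub_re, Complex.re_ofReal_mul, q3,
      Complex.zero_re] at q1
    have q5 : (D * (A - B)).trace.re = (D * A).trace.re - (D * B).trace.re := by
      rw [Matrix.mul_sub, Matrix.trace_sub, Complex.sub_re]
    have q6 : (ρ * (A + B)).trace.re = (ρ * A).trace.re + (ρ * B).trace.re := by
      rw [Matrix.mul_add, Matrix.trace_add, Complex.add_re]
    simp only [Matrix.sub_mul, Matrix.neg_mul, Matrix.smul_mul, Matrix.trace_sub,
      Matrix.trace_neg, Matrix.trace_smul, smul_eq_mul, Complex.sub_re, Complex.neg_re,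
      Complex.re_ofReal_mul] at hAt hBt
    set t := (ρ * (A + B)).trace.re with ht
    have q7 : ε * t ≤ (D * (A - B)).trace.re := by rw [q5, q6]; linarith
    have q8 := mul_le_mul_of_nonneg_left q7 hε.le
    have q9 : ε * (ε * (δ * (A + B).trace.re)) ≤ ε * (ε * (δ * d)) := by gcongr
    have q10 : ε^2 * t ≤ ε^2 * τ := by nlinarith
    exact le_of_mul_le_mul_left q10 (by positivity)
  · rw [hbar]
    convert hBp using 1
    simp only [Matrix.mul_add (1 - (A + B)), Matrix.mul_sub (1 - (A + B)), Matrix.add_mul _ _ (1 - (A + B)), Matrix.sub_mul _ _ (1 - (A + B)), Matrix.mul_neg, Matrix.neg_mul,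
      Matrix.mul_smul, Matrix.smul_mul]
    push_cast
    simp only [sub_smul, one_smul]
    abel
  · rw [hbar]
    convert hAp' using 1
    simp only [Matrix.mul_add (1 - (A + B)), Matrix.mul_sub (1 - (A + B)), Matrix.add_mul _ _ (1 - (A + B)), Matrix.sub_mul _ _ (1 - (A + B)), Matrix.mul_neg, Matrix.neg_mul,
      Matrix.mul_smul, Matrix.smul_mul]
    push_cast
    simp only [add_smul, one_smul]
    abel
  · refine hLK2.trans ?_
    have hlog : 1 ≤ 2 * Real.log 2 * Real.logb 2 (2 * d) := by
      have h1 : 1 ≤ Real.logb 2 (2 * d) := by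
        rw [Real.le_logb_iff_rpow_le (by norm_num) (by positivity), Real.rpow_one]
        have : (1:ℝ) ≤ d := by exact_mod_cast hd
        linarith
      have h2 := Real.log_two_gt_d9
      nlinarith
    rw [hK]
    have := le_mul_of_one_le_right (by positivity : 0 ≤ η * d) hlog
    gcongr
end

section
/- (Operator Chernoff bound, one-sided.) Let X, X₁, …, Xₙ be i.i.d. discrete random variables with values in the operator interval [0, 𝟙] on a d-dimensional complex Hilbert space, and let a, m ∈ ℝ with 0 < m ≤ a < 1. (a) If 𝔼X ≤ m𝟙 and A ≥ a𝟙, then Pr{ ∑_{i=1}^{n} Xᵢ ≰ nA } ≤ d · 2^(−n·D(a‖m)). (b) Symmetrically, if 𝔼X ≥ a𝟙 and A ≤ m𝟙 (so 0 < m ≤ a < 1 as before, with the roles of upper and lower bounds exchanged), then Pr{ ∑_{i=1}^{n} Xᵢ ≱ nA } ≤ d · 2^(−n·D(m‖a)). -/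
open scoped BigOperators
open ComplexOrder
open scoped Matrix

/-- Probability of an event under a finitely supported distribution. -/
noncomputable def prOf {α : Type*} [Fintype α] (p : α → ℝ) (s : Set α) : ℝ :=
  ∑ a, s.indicator p a

/-- i.i.d. product distribution. -/
def prodP {Ω : Type*} [Fintype Ω] (p : Ω → ℝ) (n : ℕ) : (Fin n → Ω) → ℝ :=
  fun ω => ∏ i, p (ω i)

/-- Binary information divergence (base 2). -/
noncomputable def binDiv (a b : ℝ) : ℝ :=
  a * Real.logb 2 (a / b) + (1 - a) * Real.logb 2 ((1 - a) / (1 - b))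

/-! Classical channel definitions -/


namespace OpChernoff

variable {d : ℕ}

lemma re_trace_mul_nonneg {A B : Matrix (Fin d) (Fin d) ℂ} (hA : A.PosSemidef)
    (hB : B.PosSemidef) : 0 ≤ (A * B).trace.re := by
  obtain ⟨C, rfl⟩ : ∃ C : Matrix (Fin d) (Fin d) ℂ, B = Cᴴ * C := by
    open scoped MatrixOrder in
    have := (CStarAlgebra.nonneg_iff_eq_star_mul_self (a := B)).1 (Matrix.nonneg_iff_posSemidef.2 hB)
    exact this
  rw [← Matrix.mul_assoc, Matrix.trace_mul_comm, ← Matrix.mul_assoc]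
  exact (Complex.le_def.1 (hA.mul_mul_conjTranspose_same C).trace_nonneg).1

lemma re_trace_mul_mono {A B C : Matrix (Fin d) (Fin d) ℂ} (hAB : (B - A).PosSemidef)
    (hC : C.PosSemidef) : (A * C).trace.re ≤ (B * C).trace.re := by
  have := re_trace_mul_nonneg hAB hC
  rw [Matrix.sub_mul, Matrix.trace_sub, Complex.sub_re] at this
  linarith

lemma re_trace_mul_mono' {A B C : Matrix (Fin d) (Fin d) ℂ} (hAB : (B - A).PosSemidef)
    (hC : C.PosSemidef) : (C * A).trace.re ≤ (C * B).trace.re := by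
  rw [Matrix.trace_mul_comm C, Matrix.trace_mul_comm C]
  exact re_trace_mul_mono hAB hC

lemma exists_diag {G : Matrix (Fin d) (Fin d) ℂ} (hG : G.IsHermitian) :
    ∃ (U : Matrix (Fin d) (Fin d) ℂ) (e : Fin d → ℝ), Uᴴ * U = 1 ∧ U * Uᴴ = 1 ∧
      G = U * Matrix.diagonal (fun i => (e i : ℂ)) * Uᴴ := by
  refine ⟨hG.eigenvectorUnitary, hG.eigenvalues, ?_, ?_, ?_⟩
  · exact Unitary.coe_star_mul_self hG.eigenvectorUnitary
  · exact Unitary.coe_mul_star_self hG.eigenvectorUnitary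
  · exact hG.spectral_theorem

lemma diag_pow {U : Matrix (Fin d) (Fin d) ℂ} {e : Fin d → ℝ} (hU : Uᴴ * U = 1)
    (hU' : U * Uᴴ = 1) (k : ℕ) :
    (U * Matrix.diagonal (fun i => (e i : ℂ)) * Uᴴ) ^ k
      = U * Matrix.diagonal (fun i => ((e i ^ k : ℝ) : ℂ)) * Uᴴ := by
  induction k with
  | zero => simp [hU']
  | succ k ih =>
    rw [pow_succ, ih]
    calc _ = U * Matrix.diagonal (fun i => ((e i ^ k : ℝ) : ℂ)) * (Uᴴ * U) *
          Matrix.diagonal (fun i => (e i : ℂ)) * Uᴴ := by simp only [Matrix.mul_assoc]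
      _ = _ := by
        rw [hU, Matrix.mul_one, Matrix.mul_assoc U, Matrix.diagonal_mul_diagonal]
        simp [pow_succ]

lemma diag_nonneg {U : Matrix (Fin d) (Fin d) ℂ} {e : Fin d → ℝ} (hU : Uᴴ * U = 1)
    (h : (U * Matrix.diagonal (fun i => (e i : ℂ)) * Uᴴ).PosSemidef) (i : Fin d) : 0 ≤ e i := by
  have h2 := h.conjTranspose_mul_mul_same U
  have : Uᴴ * (U * Matrix.diagonal (fun i => (e i : ℂ)) * Uᴴ) * U
      = Matrix.diagonal (fun i => (e i : ℂ)) := by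
    calc _ = (Uᴴ * U) * Matrix.diagonal (fun i => (e i : ℂ)) * (Uᴴ * U) := by
          simp only [Matrix.mul_assoc]
      _ = _ := by simp [hU]
  rw [this] at h2
  have := h2.diag_nonneg (i := i)
  simpa using this

lemma cross_diag {Y : Matrix (Fin d) (Fin d) ℂ} (hY : Y.IsHermitian) (e : Fin d → ℝ)
    (he : ∀ i, 0 ≤ e i) (k l : ℕ) :
    (Y * Matrix.diagonal (fun i => ((e i ^ k : ℝ) : ℂ)) * Y *
      Matrix.diagonal (fun i => ((e i ^ l : ℝ) : ℂ))).trace.re ≤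
    (Y * Y * Matrix.diagonal (fun i => ((e i ^ (k + l) : ℝ) : ℂ))).trace.re := by
  have hsym : ∀ i j, Y j i = star (Y i j) := fun i j => (hY.apply j i).symm
  have h1 : ∀ f g : Fin d → ℝ, (Y * Matrix.diagonal (fun i => ((f i : ℝ) : ℂ)) * Y *
      Matrix.diagonal (fun i => ((g i : ℝ) : ℂ))).trace.re
      = ∑ i, ∑ j, Complex.normSq (Y i j) * (f j * g i) := by
    intro f g
    rw [Matrix.trace, Complex.re_sum]
    refine Finset.sum_congr rfl fun i _ => ?_
    rw [Matrix.diag_apply, Matrix.mul_diagonal, Matrix.mul_apply, Finset.sum_mul, Complex.re_sum]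
    refine Finset.sum_congr rfl fun j _ => ?_
    rw [Matrix.mul_diagonal]
    rw [hsym i j]
    have : Y i j * (f j : ℂ) * star (Y i j) * (g i : ℂ)
        = ((Complex.normSq (Y i j) * (f j * g i) : ℝ) : ℂ) := by
      push_cast
      rw [Complex.normSq_eq_conj_mul_self]
      simp only [Complex.star_def]
      ring
    rw [this, Complex.ofReal_re]
  have h2 := h1 (fun _ => 1) (fun i => e i ^ (k + l))
  have h3 := h1 (fun i => e i ^ k) (fun i => e i ^ l)
  simp only [Complex.ofReal_one, Matrix.diagonal_one, Matrix.mul_one] at h2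
  rw [h2, h3]
  have hn : ∀ i j, Complex.normSq (Y i j) = Complex.normSq (Y j i) := by
    intro i j; rw [hsym i j, Complex.star_def, Complex.normSq_conj]
  have swap : ∀ F : Fin d → Fin d → ℝ, ∑ i, ∑ j, Complex.normSq (Y i j) * F i j
      = ∑ i, ∑ j, Complex.normSq (Y i j) * F j i := by
    intro F
    rw [Finset.sum_comm]
    refine Finset.sum_congr rfl fun i _ => Finset.sum_congr rfl fun j _ => ?_
    rw [hn]
  have key : ∀ i j, 0 ≤ (e i ^ k - e j ^ k) * (e i ^ l - e j ^ l) := by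
    intro i j
    rcases le_total (e i) (e j) with h | h
    · exact mul_nonneg_of_nonpos_of_nonpos (sub_nonpos.2 (pow_le_pow_left₀ (he i) h k))
        (sub_nonpos.2 (pow_le_pow_left₀ (he i) h l))
    · exact mul_nonneg (sub_nonneg.2 (pow_le_pow_left₀ (he j) h k))
        (sub_nonneg.2 (pow_le_pow_left₀ (he j) h l))
  have hs : 0 ≤ ∑ i, ∑ j, Complex.normSq (Y i j) * ((e i ^ k - e j ^ k) * (e i ^ l - e j ^ l)) :=
    Finset.sum_nonneg fun i _ => Finset.sum_nonneg fun j _ =>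
      mul_nonneg (Complex.normSq_nonneg _) (key i j)
  have e1 := swap (fun i j => 1 * e i ^ (k + l))
  have e2 := swap (fun i j => e j ^ k * e i ^ l)
  have e3 : ∑ i, ∑ j, Complex.normSq (Y i j) * ((e i ^ k - e j ^ k) * (e i ^ l - e j ^ l))
      = ∑ i, ∑ j, Complex.normSq (Y i j) * (1 * e i ^ (k + l))
      + ∑ i, ∑ j, Complex.normSq (Y i j) * (1 * e j ^ (k + l))
      - ∑ i, ∑ j, Complex.normSq (Y i j) * (e j ^ k * e i ^ l)
      - ∑ i, ∑ j, Complex.normSq (Y i j) * (e i ^ k * e j ^ l) := by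
    simp only [← Finset.sum_add_distrib, ← Finset.sum_sub_distrib]
    refine Finset.sum_congr rfl fun i _ => Finset.sum_congr rfl fun j _ => ?_
    ring
  linarith

lemma cross {G X : Matrix (Fin d) (Fin d) ℂ} (hG : G.PosSemidef) (hX : X.IsHermitian) (k l : ℕ) :
    (X * G ^ k * X * G ^ l).trace.re ≤ (X * X * G ^ (k + l)).trace.re := by
  obtain ⟨U, e, hU, hU', rfl⟩ := exists_diag hG.1
  have he := diag_nonneg hU hG
  simp only [diag_pow hU hU']
  have hY : (Uᴴ * X * U).IsHermitian := by
    rw [Matrix.IsHermitian]; simp [Matrix.conjTranspose_mul, hX.eq, Matrix.mul_assoc]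
  have := cross_diag hY e he k l
  have c1 : ∀ D E : Matrix (Fin d) (Fin d) ℂ, (X * (U * D * Uᴴ) * X * (U * E * Uᴴ)).trace
      = ((Uᴴ * X * U) * D * (Uᴴ * X * U) * E).trace := by
    intro D E
    rw [← Matrix.mul_assoc _ (U * E), Matrix.trace_mul_comm]
    simp only [Matrix.mul_assoc]
  have c2 : ∀ E : Matrix (Fin d) (Fin d) ℂ, (X * X * (U * E * Uᴴ)).trace
      = ((Uᴴ * X * U) * (Uᴴ * X * U) * E).trace := by
    intro E
    have := c1 1 E
    simpa [hU'] using this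
  rw [c1, c2]
  exact this

lemma sub_sq_psd {X : Matrix (Fin d) (Fin d) ℂ} (hX : X.PosSemidef) (hX1 : (1 - X).PosSemidef) :
    (X - X * X).PosSemidef := by
  have h1 := hX1.conjTranspose_mul_mul_same X
  have h2 := hX.conjTranspose_mul_mul_same (1 - X)
  rw [hX.1.eq] at h1
  rw [hX1.1.eq] at h2
  convert h1.add h2 using 1
  noncomm_ring

lemma pow_succ_sub_psd {G : Matrix (Fin d) (Fin d) ℂ} {K : ℝ} (hK : 0 ≤ K)
    (hG : G.IsHermitian) (h : (G - (K : ℂ) • 1).PosSemidef) :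
    ∀ l : ℕ, (G ^ (l + 1) - (K : ℂ) • G ^ l).PosSemidef
  | 0 => by simpa using h
  | 1 => by
    have h1 := h.smul (a := (K : ℂ)) (by simpa using hK)
    have h2 := h.pow 2
    convert h2.add h1 using 1
    simp only [pow_two, pow_one, Matrix.sub_mul, Matrix.mul_sub, smul_sub, one_add_one_eq_two]
    simp
  | l + 2 => by
    have := (pow_succ_sub_psd hK hG h l).conjTranspose_mul_mul_same G
    rw [hG.eq] at this
    convert this using 1
    rw [Matrix.mul_sub, Matrix.sub_mul]
    simp only [Matrix.mul_smul, Matrix.smul_mul, ← pow_succ, ← pow_succ']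

lemma psd_of_sub {G : Matrix (Fin d) (Fin d) ℂ} {K : ℝ} (hK : 0 ≤ K)
    (h : (G - (K : ℂ) • 1).PosSemidef) : G.PosSemidef := by
  have := h.add (Matrix.PosSemidef.one.smul (a := (K : ℂ)) (by simpa using hK))
  simpa using this

lemma trace_pow_lower {H : Matrix (Fin d) (Fin d) ℂ} (hH : H.PosSemidef) {c : ℝ} (hc : 0 ≤ c)
    (h : ¬ ((c : ℂ) • 1 - H).PosSemidef) (N : ℕ) : c ^ N ≤ (H ^ N).trace.re := by
  obtain ⟨U, e, hU, hU', rfl⟩ := exists_diag hH.1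
  have he := diag_nonneg hU hH
  have : ∃ i, c < e i := by
    by_contra! hcon
    apply h
    have h1 : (Matrix.diagonal (fun i => ((c - e i : ℝ) : ℂ))).PosSemidef :=
      Matrix.PosSemidef.diagonal (fun i => by simpa using hcon i)
    have h2 := h1.mul_mul_conjTranspose_same U
    convert h2 using 1
    have : Matrix.diagonal (fun i => ((c - e i : ℝ) : ℂ))
        = (c : ℂ) • (1 : Matrix (Fin d) (Fin d) ℂ) - Matrix.diagonal (fun i => (e i : ℂ)) := by
      ext i j; by_cases hij : i = j <;> simp [hij]
    rw [this, Matrix.mul_sub, Matrix.sub_mul]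
    simp [hU']
  obtain ⟨i, hi⟩ := this
  rw [diag_pow hU hU', Matrix.trace_mul_comm, ← Matrix.mul_assoc, hU, Matrix.one_mul,
    Matrix.trace_diagonal, Complex.re_sum]
  simp only [Complex.ofReal_re]
  calc c ^ N ≤ e i ^ N := pow_le_pow_left₀ hc hi.le N
    _ ≤ _ := Finset.single_le_sum (f := fun i => e i ^ N)
      (fun j _ => pow_nonneg (he j) N) (Finset.mem_univ i)

section deriv

attribute [local instance] Matrix.frobeniusNormedRing Matrix.frobeniusNormedAlgebra

lemma hasDerivAt_pow_line (H X C : Matrix (Fin d) (Fin d) ℂ) (N : ℕ) (t : ℝ) :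
    HasDerivAt (fun t : ℝ => (C * (H + t • X) ^ N).trace.re)
      (∑ i ∈ Finset.range N,
        (C * ((H + t • X) ^ (N - 1 - i) * X * (H + t • X) ^ i)).trace.re) t := by
  have h0 : HasDerivAt (fun t : ℝ => H + t • X) X t := by
    have := ((hasDerivAt_id t).smul_const X).const_add H
    rw [one_smul] at this
    exact this
  have h1 := h0.fun_pow' N
  let L : Matrix (Fin d) (Fin d) ℂ →ₗ[ℝ] ℝ :=
    { toFun := fun Y => (C * Y).trace.re
      map_add' := by intro x y; simp [Matrix.mul_add]
      map_smul' := by intro c x; simp }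
  have h2 := (LinearMap.toContinuousLinearMap L).hasFDerivAt.comp_hasDerivAt t h1
  have e : (LinearMap.toContinuousLinearMap L) (∑ i ∈ Finset.range N, (H + t • X) ^ (N.pred - i) * X * (H + t • X) ^ i)
    = ∑ i ∈ Finset.range N,
        (C * ((H + t • X) ^ (N - 1 - i) * X * (H + t • X) ^ i)).trace.re := by
    rw [map_sum]; rfl
  exact e ▸ h2

end deriv

lemma line_sub_psd {H X : Matrix (Fin d) (Fin d) ℂ} {K : ℝ}
    (hH : (H - (K : ℂ) • 1).PosSemidef) (hX : X.PosSemidef) {t : ℝ} (ht : 0 ≤ t) :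
    ((H + t • X) - (K : ℂ) • 1).PosSemidef := by
  have h1 : (t • X).PosSemidef := hX.smul ht
  convert hH.add h1 using 1
  abel

lemma deriv_bound {G X : Matrix (Fin d) (Fin d) ℂ} {K : ℝ} (hK : 0 < K) (M : ℕ)
    (hG : (G - (K : ℂ) • 1).PosSemidef) (hX : X.PosSemidef) (hX1 : (1 - X).PosSemidef) :
    ∑ i ∈ Finset.range M, (X * (G ^ (M - 1 - i) * X * G ^ i)).trace.re
      ≤ (M / K) * (X * G ^ M).trace.re := by
  have hGp := psd_of_sub hK.le hG
  rcases M with _ | M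
  · simp
  have h1 : ∀ i ∈ Finset.range (M + 1), (X * (G ^ (M + 1 - 1 - i) * X * G ^ i)).trace.re
      ≤ K⁻¹ * (X * G ^ (M + 1)).trace.re := by
    intro i hi
    have hi' : M - i + i = M := by
      have := Finset.mem_range.1 hi; omega
    have a1 := cross hGp hX.1 (M - i) i
    rw [hi'] at a1
    have a2 := re_trace_mul_mono (sub_sq_psd hX hX1) (hGp.pow M)
    have a3 := re_trace_mul_mono' (pow_succ_sub_psd hK.le hGp.1 hG M) hX
    simp only [Matrix.mul_smul, Matrix.trace_smul, smul_eq_mul, Complex.re_ofReal_mul] at a3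
    have a4 : (X * G ^ M).trace.re ≤ K⁻¹ * (X * G ^ (M + 1)).trace.re := by
      rw [inv_mul_eq_div, le_div_iff₀ hK]; linarith
    simp only [Nat.add_sub_cancel, ← Matrix.mul_assoc]
    linarith
  refine (Finset.sum_le_sum h1).trans ?_
  simp [div_eq_mul_inv, mul_assoc]

lemma one_step {H X : Matrix (Fin d) (Fin d) ℂ} {K : ℝ} (hK : 0 < K) (M : ℕ) (hM : 0 < M)
    (hH : (H - (K : ℂ) • 1).PosSemidef) (hX : X.PosSemidef) (hX1 : (1 - X).PosSemidef) :
    ((H + X) ^ (M + 1)).trace.re ≤ (H ^ (M + 1)).trace.re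
      + (M + 1) * ((Real.exp (M / K) - 1) / (M / K)) * (X * H ^ M).trace.re := by
  set θ : ℝ := M / K with hθ
  have hθp : 0 < θ := by positivity
  set f : ℝ → ℝ := fun t => (X * (H + t • X) ^ M).trace.re with hf
  have hfd : ∀ t, HasDerivAt f _ t := fun t => hasDerivAt_pow_line H X X M t
  set g : ℝ → ℝ := fun t => Real.exp (-θ * t) * f t with hg
  have hgd : ∀ t, HasDerivAt g _ t := fun t =>
    ((((hasDerivAt_id t).const_mul (-θ)).exp).mul (hfd t))
  have hganti : AntitoneOn g (Set.Ici 0) := by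
    refine antitoneOn_of_deriv_nonpos (convex_Ici 0)
      (fun t _ => (hgd t).continuousAt.continuousWithinAt)
      (fun t _ => (hgd t).differentiableAt.differentiableWithinAt) ?_
    intro t ht
    rw [interior_Ici] at ht
    rw [(hgd t).deriv]
    have := deriv_bound hK M (line_sub_psd hH hX (le_of_lt ht)) hX hX1
    have he := Real.exp_pos (-θ * t)
    simp only [id] at *
    have h2 := mul_le_mul_of_nonneg_left this he.le
    simp only [hf, hθ] at *
    linarith
  have hfb : ∀ t, 0 ≤ t → f t ≤ f 0 * Real.exp (θ * t) := by
    intro t ht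
    have := hganti (Set.mem_Ici.2 le_rfl) (Set.mem_Ici.2 ht) ht
    simp only [hg, mul_zero, Real.exp_zero, one_mul] at this
    have h2 := mul_le_mul_of_nonneg_left this (Real.exp_pos (θ * t)).le
    rw [← mul_assoc, ← Real.exp_add] at h2
    simp only [neg_mul, add_neg_cancel, Real.exp_zero, one_mul] at h2
    linarith
  have hψd : ∀ t, HasDerivAt (fun t : ℝ => ((H + t • X) ^ (M + 1)).trace.re) ((M + 1) * f t) t := by
    intro t
    have h := hasDerivAt_pow_line H X 1 (M + 1) t
    simp only [Matrix.one_mul] at h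
    convert h using 1
    have : ∀ i ∈ Finset.range (M + 1), ((H + t • X) ^ (M + 1 - 1 - i) * X * (H + t • X) ^ i).trace.re
      = f t := by
      intro i hi
      have hi' : i + (M + 1 - 1 - i) = M := by
        have := Finset.mem_range.1 hi; omega
      rw [Matrix.trace_mul_comm, ← Matrix.mul_assoc, ← pow_add, hi', Matrix.trace_mul_comm]
    rw [Finset.sum_congr rfl this]
    simp
  set q : ℝ → ℝ := fun t => ((H + t • X) ^ (M + 1)).trace.re
    - (M + 1) * f 0 / θ * Real.exp (θ * t) with hq
  have hqd : ∀ t, HasDerivAt q _ t := fun t =>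
    (hψd t).sub ((((hasDerivAt_id t).const_mul θ).exp).const_mul ((M + 1) * f 0 / θ))
  have hqanti : AntitoneOn q (Set.Ici 0) := by
    refine antitoneOn_of_deriv_nonpos (convex_Ici 0)
      (fun t _ => (hqd t).continuousAt.continuousWithinAt)
      (fun t _ => (hqd t).differentiableAt.differentiableWithinAt) ?_
    intro t ht
    rw [interior_Ici] at ht
    rw [(hqd t).deriv]
    have h1 := mul_le_mul_of_nonneg_left (hfb t (le_of_lt ht)) (by positivity : (0:ℝ) ≤ M + 1)
    have h2 : (M + 1) * f 0 / θ * (Real.exp (θ * id t) * (θ * 1))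
        = (M + 1) * (f 0 * Real.exp (θ * t)) := by
      simp only [id]; field_simp
    rw [h2]; linarith
  have := hqanti (Set.mem_Ici.2 le_rfl) (Set.mem_Ici.2 zero_le_one) zero_le_one
  simp only [hq, hf, one_smul, zero_smul, add_zero, mul_one, mul_zero, Real.exp_zero] at this
  have e : (M + 1) * ((Real.exp θ - 1) / θ) * (X * H ^ M).trace.re
    = (M + 1) * (X * H ^ M).trace.re / θ * Real.exp θ - (M + 1) * (X * H ^ M).trace.re / θ := by
    ring
  rw [e]; linarith

lemma avg_step {Ω : Type*} [Fintype Ω] (p : Ω → ℝ) (hp : IsProbDist p)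
    (Xv : Ω → Matrix (Fin d) (Fin d) ℂ)
    (hX : ∀ ω, (Xv ω).PosSemidef ∧ (1 - Xv ω).PosSemidef) {m : ℝ} (hm : 0 ≤ m)
    (hE : ((m:ℂ) • 1 - ∑ ω, (p ω : ℂ) • Xv ω).PosSemidef)
    {H : Matrix (Fin d) (Fin d) ℂ} {K : ℝ} (hK : 0 < K) (M : ℕ) (hM : 0 < M)
    (hH : (H - (K : ℂ) • 1).PosSemidef) :
    ∑ ω, p ω * ((H + Xv ω) ^ (M + 1)).trace.re ≤
      (1 + (M + 1) / M * (Real.exp (M / K) - 1) * m) * (H ^ (M + 1)).trace.re := by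
  set c : ℝ := (M + 1) * ((Real.exp (M / K) - 1) / (M / K)) with hc
  have hHp := psd_of_sub hK.le hH
  have hexp : 0 ≤ Real.exp (M / K) - 1 := by
    have : (0:ℝ) ≤ M / K := by positivity
    linarith [Real.add_one_le_exp ((M:ℝ) / K)]
  have hc0 : 0 ≤ c := by positivity
  have h1 : ∑ ω, p ω * ((H + Xv ω) ^ (M + 1)).trace.re ≤
      ∑ ω, p ω * ((H ^ (M + 1)).trace.re + c * (Xv ω * H ^ M).trace.re) :=
    Finset.sum_le_sum fun ω _ =>
      mul_le_mul_of_nonneg_left (one_step hK M hM hH (hX ω).1 (hX ω).2) (hp.1 ω)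
  have h2 : ∑ ω, p ω * ((H ^ (M + 1)).trace.re + c * (Xv ω * H ^ M).trace.re)
      = (H ^ (M + 1)).trace.re + c * ((∑ ω, (p ω : ℂ) • Xv ω) * H ^ M).trace.re := by
    rw [Matrix.sum_mul, Matrix.trace_sum, Complex.re_sum, Finset.mul_sum]
    simp only [mul_add, Finset.sum_add_distrib, ← Finset.sum_mul, hp.2, one_mul, Matrix.smul_mul,
      Matrix.trace_smul, smul_eq_mul, Complex.re_ofReal_mul]
    congr 1
    exact Finset.sum_congr rfl fun ω _ => by ring
  have h3 := re_trace_mul_mono hE (hHp.pow M)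
  have h4 := re_trace_mul_mono' (pow_succ_sub_psd hK.le hHp.1 hH M) Matrix.PosSemidef.one
  simp only [Matrix.smul_mul, Matrix.one_mul, Matrix.trace_smul, smul_eq_mul,
    Complex.re_ofReal_mul] at h3 h4
  have h5 : c * ((∑ ω, (p ω : ℂ) • Xv ω) * H ^ M).trace.re
      ≤ c * (m * (K⁻¹ * (H ^ (M + 1)).trace.re)) := by
    refine mul_le_mul_of_nonneg_left (h3.trans (mul_le_mul_of_nonneg_left ?_ hm)) hc0
    rw [inv_mul_eq_div, le_div_iff₀ hK]; linarith
  have h6 : c * (m * (K⁻¹ * (H ^ (M + 1)).trace.re))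
      = (M + 1) / M * (Real.exp (M / K) - 1) * m * (H ^ (M + 1)).trace.re := by
    rw [hc]; have : (M:ℝ) ≠ 0 := by positivity
    field_simp
  rw [add_mul, one_mul]
  linarith

lemma sum_bound {Ω : Type*} [Fintype Ω] (p : Ω → ℝ) (hp : IsProbDist p)
    (Xv : Ω → Matrix (Fin d) (Fin d) ℂ)
    (hX : ∀ ω, (Xv ω).PosSemidef ∧ (1 - Xv ω).PosSemidef) {m : ℝ} (hm : 0 ≤ m)
    (hE : ((m:ℂ) • 1 - ∑ ω, (p ω : ℂ) • Xv ω).PosSemidef)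
    {K : ℝ} (hK : 0 < K) (M : ℕ) (hM : 0 < M) (n : ℕ) :
    ∀ H : Matrix (Fin d) (Fin d) ℂ, (H - (K : ℂ) • 1).PosSemidef →
    ∑ ω, prodP p n ω * ((H + ∑ i, Xv (ω i)) ^ (M + 1)).trace.re ≤
      (1 + (M + 1) / M * (Real.exp (M / K) - 1) * m) ^ n * (H ^ (M + 1)).trace.re := by
  have hexp : 0 ≤ Real.exp (M / K) - 1 := by
    have : (0:ℝ) ≤ M / K := by positivity
    linarith [Real.add_one_le_exp ((M:ℝ) / K)]
  set C := (1 + (M + 1) / M * (Real.exp (M / K) - 1) * m) with hC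
  have hC0 : 0 ≤ C := by positivity
  induction n with
  | zero => intro H hH; simp [prodP]
  | succ n ih =>
    intro H hH
    rw [← (Fin.consEquiv (fun _ => Ω)).sum_comp, Fintype.sum_prod_type]
    have h1 : ∀ x : Ω, ∑ y : Fin n → Ω, prodP p (n + 1) ((Fin.consEquiv (fun _ => Ω)) (x, y)) *
        ((H + ∑ i, Xv ((Fin.consEquiv (fun _ => Ω)) (x, y) i)) ^ (M + 1)).trace.re
        ≤ p x * (C ^ n * ((H + Xv x) ^ (M + 1)).trace.re) := by
      intro x
      have hx := ih (H + Xv x) (by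
        have := line_sub_psd hH (hX x).1 (zero_le_one)
        simpa using this)
      refine le_trans (le_of_eq ?_) (mul_le_mul_of_nonneg_left hx (hp.1 x))
      rw [Finset.mul_sum]
      refine Finset.sum_congr rfl fun y _ => ?_
      simp [prodP, Fin.consEquiv, Fin.prod_univ_succ, Fin.sum_univ_succ, mul_assoc, add_assoc]
    refine (Finset.sum_le_sum fun x _ => h1 x).trans ?_
    have := mul_le_mul_of_nonneg_left (avg_step p hp Xv hX hm hE hK M hM hH) (pow_nonneg hC0 n)
    rw [Finset.mul_sum, ← hC, ← mul_assoc, ← pow_succ] at this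
    refine le_trans (le_of_eq ?_) this
    exact Finset.sum_congr rfl fun ω _ => by ring

lemma prodP_nonneg {Ω : Type*} [Fintype Ω] {p : Ω → ℝ} (hp : IsProbDist p) (n : ℕ)
    (ω : Fin n → Ω) : 0 ≤ prodP p n ω := Finset.prod_nonneg fun i _ => hp.1 _

lemma not_psd_imp {A S : Matrix (Fin d) (Fin d) ℂ} {a K : ℝ} {n : ℕ}
    (hA : (A - (a:ℂ) • 1).PosSemidef) (h : ¬ ((n:ℂ) • A - S).PosSemidef) :
    ¬ (((K + n * a : ℝ) : ℂ) • 1 - ((K:ℂ) • 1 + S)).PosSemidef := by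
  intro h2
  apply h
  have h1 := hA.smul (a := (n : ℂ)) (by positivity)
  convert h1.add h2 using 1
  push_cast
  simp only [smul_sub, add_smul, smul_smul]
  abel

lemma finite_bound {Ω : Type*} [Fintype Ω] (p : Ω → ℝ) (hp : IsProbDist p)
    (Xv : Ω → Matrix (Fin d) (Fin d) ℂ)
    (hX : ∀ ω, (Xv ω).PosSemidef ∧ (1 - Xv ω).PosSemidef) {m a : ℝ} (hm : 0 ≤ m) (ha : 0 ≤ a)
    (hE : ((m:ℂ) • 1 - ∑ ω, (p ω : ℂ) • Xv ω).PosSemidef) (n : ℕ)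
    {A : Matrix (Fin d) (Fin d) ℂ} (hA : (A - (a:ℂ) • 1).PosSemidef)
    {θ : ℝ} (hθ : 0 < θ) (M : ℕ) (hM : 0 < M) :
    prOf (prodP p n) {ω | ¬ ((n:ℂ) • A - ∑ i, Xv (ω i)).PosSemidef} *
      ((1 + (n * a * θ) / M) ^ M * (1 + (n * a * θ) * (1 / M)))
      ≤ d * (1 + (1 + 1 / M) * (Real.exp θ - 1) * m) ^ n := by
  have hM' : (0:ℝ) < M := by positivity
  set K : ℝ := M / θ with hKdef
  have hK : 0 < K := by positivity
  have hMK : M / K = θ := by rw [hKdef]; field_simp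
  have h1 := sum_bound p hp Xv hX hm hE hK M hM n ((K:ℂ) • 1) (by
    simpa using Matrix.PosSemidef.zero)
  rw [hMK] at h1
  have htr : ((((K:ℂ) • (1 : Matrix (Fin d) (Fin d) ℂ)) ^ (M + 1)).trace).re = K ^ (M + 1) * d := by
    rw [smul_pow, one_pow, Matrix.trace_smul, Matrix.trace_one, ← Complex.ofReal_pow, smul_eq_mul,
      Complex.re_ofReal_mul]
    simp
  rw [htr] at h1
  have h2 : prOf (prodP p n) {ω | ¬ ((n:ℂ) • A - ∑ i, Xv (ω i)).PosSemidef} *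
      (K + n * a) ^ (M + 1) ≤
      ∑ ω, prodP p n ω * ((((K:ℂ) • 1) + ∑ i, Xv (ω i)) ^ (M + 1)).trace.re := by
    rw [prOf, Finset.sum_mul]
    refine Finset.sum_le_sum fun ω _ => ?_
    have hS : (((K:ℂ) • 1) + ∑ i, Xv (ω i)).PosSemidef :=
      (Matrix.PosSemidef.one.smul (by simpa using hK.le)).add
        (Matrix.posSemidef_sum _ fun i _ => (hX (ω i)).1)
    by_cases hω : ((n:ℂ) • A - ∑ i, Xv (ω i)).PosSemidef
    · rw [Set.indicator_of_notMem (by simpa using hω), zero_mul]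
      exact mul_nonneg (prodP_nonneg hp n ω)
        (Complex.le_def.1 (hS.pow (M + 1)).trace_nonneg).1
    · rw [Set.indicator_of_mem (by simpa using hω)]
      exact mul_le_mul_of_nonneg_left
        (trace_pow_lower hS (by positivity) (not_psd_imp hA hω) (M + 1)) (prodP_nonneg hp n ω)
  have h3 := h2.trans h1
  have e1 : (K + n * a) ^ (M + 1) = K ^ (M + 1) *
      ((1 + (n * a * θ) / M) ^ M * (1 + (n * a * θ) * (1 / M))) := by
    have : K + n * a = K * (1 + (n * a * θ) / M) := by
      rw [hKdef]; field_simp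
    rw [this, mul_pow, pow_succ (1 + (n * a * θ) / M), mul_one_div]
  have e2 : ((M:ℝ) + 1) / M = 1 + 1 / M := by field_simp
  rw [e1, e2] at h3
  have hKp : 0 < K ^ (M + 1) := by positivity
  refine le_of_mul_le_mul_left ?_ hKp
  linarith

lemma theta_bound {Ω : Type*} [Fintype Ω] (p : Ω → ℝ) (hp : IsProbDist p)
    (Xv : Ω → Matrix (Fin d) (Fin d) ℂ)
    (hX : ∀ ω, (Xv ω).PosSemidef ∧ (1 - Xv ω).PosSemidef) {m a : ℝ} (hm : 0 ≤ m) (ha : 0 ≤ a)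
    (hE : ((m:ℂ) • 1 - ∑ ω, (p ω : ℂ) • Xv ω).PosSemidef) (n : ℕ)
    {A : Matrix (Fin d) (Fin d) ℂ} (hA : (A - (a:ℂ) • 1).PosSemidef)
    {θ : ℝ} (hθ : 0 < θ) :
    prOf (prodP p n) {ω | ¬ ((n:ℂ) • A - ∑ i, Xv (ω i)).PosSemidef} * Real.exp (n * a * θ)
      ≤ d * (1 + (Real.exp θ - 1) * m) ^ n := by
  have t0 : Filter.Tendsto (fun M : ℕ => (1:ℝ) / M) Filter.atTop (nhds 0) :=
    tendsto_one_div_atTop_nhds_zero_nat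
  have t1 := ((Real.tendsto_one_add_div_pow_exp (n * a * θ)).mul
    ((t0.const_mul (n * a * θ)).const_add 1)).const_mul
    (prOf (prodP p n) {ω | ¬ ((n:ℂ) • A - ∑ i, Xv (ω i)).PosSemidef})
  have t2 := (((((t0.const_add 1).mul_const (Real.exp θ - 1)).mul_const m).const_add 1).pow
    n).const_mul (d : ℝ)
  have := le_of_tendsto_of_tendsto t1 t2 (by
    filter_upwards [Filter.eventually_gt_atTop 0] with M hM
    exact finite_bound p hp Xv hX hm ha hE n hA hθ M hM)
  simpa using this

lemma prOf_le_one {Ω : Type*} [Fintype Ω] (p : Ω → ℝ) (hp : IsProbDist p) (n : ℕ)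
    (s : Set (Fin n → Ω)) : prOf (prodP p n) s ≤ 1 := by
  have : ∑ ω, prodP p n ω = 1 := by
    classical
    have := Finset.prod_univ_sum (fun _ : Fin n => (Finset.univ : Finset Ω)) (fun _ x => p x)
    simp only [hp.2, Finset.prod_const_one, Fintype.piFinset_univ] at this
    exact this.symm
  rw [← this]
  exact Finset.sum_le_sum fun ω _ => Set.indicator_le_self' (fun _ _ => prodP_nonneg hp n _) ω

lemma part_a {Ω : Type*} [Fintype Ω] (p : Ω → ℝ) (hp : IsProbDist p)
    (Xv : Ω → Matrix (Fin d) (Fin d) ℂ)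
    (hX : ∀ ω, (Xv ω).PosSemidef ∧ (1 - Xv ω).PosSemidef)
    (n : ℕ) (a m : ℝ) (hm : 0 < m) (hma : m ≤ a) (ha : a < 1)
    (A : Matrix (Fin d) (Fin d) ℂ)
    (hE : ((m:ℂ) • 1 - ∑ ω, (p ω : ℂ) • Xv ω).PosSemidef) 
    (hA : (A - (a:ℂ) • 1).PosSemidef) :
      prOf (prodP p n) {ω | ¬ ((n:ℂ) • A - ∑ i, Xv (ω i)).PosSemidef}
        ≤ d * (2:ℝ) ^ (-(n:ℝ) * binDiv a m) := by
  have ha0 : 0 < a := hm.trans_le hma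
  have h1a : 0 < 1 - a := by linarith
  have h1m : 0 < 1 - m := by linarith
  rcases hma.eq_or_lt with rfl | hlt
  · have hD : binDiv m m = 0 := by
      simp [binDiv, div_self hm.ne', div_self h1m.ne']
    rw [hD, mul_zero, Real.rpow_zero, mul_one]
    rcases Nat.eq_zero_or_pos d with rfl | hd
    · have : {ω : Fin n → Ω | ¬ ((n:ℂ) • A - ∑ i, Xv (ω i)).PosSemidef} = ∅ := by
        ext ω
        simp only [Set.mem_ofPred_eq, Set.mem_empty_iff_false, iff_false, not_not]
        rw [Subsingleton.elim ((n:ℂ) • A - ∑ i, Xv (ω i)) 0]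
        exact Matrix.PosSemidef.zero
      rw [this]; simp [prOf]
    · exact (prOf_le_one p hp n _).trans (by exact_mod_cast hd)
  · set r := a * (1 - m) / (m * (1 - a)) with hr
    have hr1 : 1 < r := by
      rw [hr, one_lt_div (by positivity)]; nlinarith
    have hr0 : 0 < r := by linarith
    have h := theta_bound p hp Xv hX hm.le ha0.le hE n hA (Real.log_pos hr1)
    rw [Real.exp_log hr0] at h
    have e1 : 1 + (r - 1) * m = (1 - m) / (1 - a) := by
      rw [hr]; field_simp; ring
    rw [e1] at h
    have e2 : (2:ℝ) ^ (-(n:ℝ) * binDiv a m)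
        = ((1 - m) / (1 - a)) ^ n * Real.exp (-(n * a * Real.log r)) := by
      have hq : 0 < (1 - m) / (1 - a) := by positivity
      rw [← Real.exp_log hq, ← Real.exp_nat_mul, ← Real.exp_add,
        Real.rpow_def_of_pos (by norm_num), binDiv, Real.logb, Real.logb, hr,
        Real.log_div (mul_pos ha0 h1m).ne' (mul_pos hm h1a).ne', Real.log_mul ha0.ne' h1m.ne',
        Real.log_mul hm.ne' h1a.ne', Real.log_div ha0.ne' hm.ne', Real.log_div h1a.ne' h1m.ne',
        Real.log_div h1m.ne' h1a.ne']
      congr 1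
      have : Real.log 2 ≠ 0 := (Real.log_pos (by norm_num)).ne'
      field_simp
      ring
    rw [e2, Real.exp_neg, ← mul_assoc, ← div_eq_mul_inv, le_div_iff₀ (Real.exp_pos _)]
    exact h

end OpChernoff

theorem stmt15 {d : ℕ} {Ω : Type*} [Fintype Ω] (p : Ω → ℝ) (hp : IsProbDist p)
    (Xv : Ω → Matrix (Fin d) (Fin d) ℂ)
    (hX : ∀ ω, (Xv ω).PosSemidef ∧ (1 - Xv ω).PosSemidef)
    (n : ℕ) (a m : ℝ) (hm : 0 < m) (hma : m ≤ a) (ha : a < 1)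
    (A : Matrix (Fin d) (Fin d) ℂ) :
    (((m:ℂ) • 1 - ∑ ω, (p ω : ℂ) • Xv ω).PosSemidef →
      (A - (a:ℂ) • 1).PosSemidef →
      prOf (prodP p n) {ω | ¬ ((n:ℂ) • A - ∑ i, Xv (ω i)).PosSemidef}
        ≤ d * (2:ℝ) ^ (-(n:ℝ) * binDiv a m)) ∧
    (((∑ ω, (p ω : ℂ) • Xv ω) - (a:ℂ) • 1).PosSemidef →
      ((m:ℂ) • 1 - A).PosSemidef →
      prOf (prodP p n) {ω | ¬ ((∑ i, Xv (ω i)) - (n:ℂ) • A).PosSemidef}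
        ≤ d * (2:ℝ) ^ (-(n:ℝ) * binDiv m a)) := by
  refine ⟨OpChernoff.part_a p hp Xv hX n a m hm hma ha A, fun hE hA => ?_⟩
  have h := OpChernoff.part_a p hp (fun ω => 1 - Xv ω)
    (fun ω => ⟨(hX ω).2, by simpa using (hX ω).1⟩) n (1 - m) (1 - a) (by linarith) (by linarith)
    (by linarith) (1 - A) (by
      convert hE using 1
      have : ∑ ω, (p ω : ℂ) • (1 : Matrix (Fin d) (Fin d) ℂ) = 1 := by
        rw [← Finset.sum_smul, ← Complex.ofReal_sum, hp.2]; simp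
      simp only [smul_sub, Finset.sum_sub_distrib, this]
      push_cast
      rw [sub_smul, one_smul]
      abel) (by
      convert hA using 1
      push_cast
      rw [sub_smul, one_smul]
      abel)
  have e : binDiv (1 - m) (1 - a) = binDiv m a := by
    simp only [binDiv, sub_sub_cancel]; ring
  rw [e] at h
  have e2 : ∀ ω : Fin n → Ω, (n:ℂ) • (1 - A) - ∑ i, (1 - Xv (ω i))
      = (∑ i, Xv (ω i)) - (n:ℂ) • A := by
    intro ω
    rw [smul_sub, Finset.sum_sub_distrib]
    simp only [Finset.sum_const, Finset.card_univ, Fintype.card_fin]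
    rw [← Nat.cast_smul_eq_nsmul ℂ]
    abel
  simp only [e2] at h
  exact h
end
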